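/- arXiv:2009.13728 — 4 statements merged into one kernel-verified Lean document; each statement's English description precedes it below -/
import Mathlib

section
/- Let a and b be real constants such that either (1) a = 1 and 1 ≤ b ≤ 4, or (2) 1 < a ≤ b and b ≤ 3 and b ≤ 1 + a and b ≤ 4a/(5a − 4). Then the function f(z) = z F(a,b;a+b;z) is injective on 𝔻 and its image f(𝔻) is a convex subset of ℂ. -/
open Complex Filter MeasureTheory Metric Set

/-- The Gaussian hypergeometric function on the unit disc (power series). -/
noncomputable def hyperF (a b c : ℝ) (z : ℂ) : ℂ :=
  ∑' n : ℕ, (((ascPochhammer ℝ n).eval a * (ascPochhammer ℝ n).eval b /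
      ((ascPochhammer ℝ n).eval c * (n.factorial : ℝ)) : ℝ) : ℂ) * z ^ n

/-!
Put `f(z) = z F(z)`, `α = a + b - 2` and `e = (a - 1)(b - 1)`. The hypergeometric equation expresses
the convexity quotient of `f` through `q = F / f'` and `u = z / (1 - z)`:
`Q = 1 + z f'' / f' = 1 - α + u + (α + (α + e) u) q`, and `z q' = 1 - q Q`. If `Re Q` first fails
to be positive at `z`, then by the Schwarz lemma `Q(z) = iy` and `z Q'(z) = -m` with
`m ≥ (1 + y²) / 2`. Eliminating `q` leaves an algebraic equation for `u`, which has no solution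
with `Re u > -1/2`, the range of `u` on the disc. Hence `Re Q > 0` throughout.

Positivity of `Re Q` makes `f` injective with convex image. Along a segment in the image of a disc
on which `f` is injective, `|f⁻¹|²` has no interior local maximum; it follows that the image is
convex and that `f⁻¹` is Lipschitz. Injectivity therefore passes to the closed disc, and then to
a slightly larger one since `f' ≠ 0`.
-/

open scoped Topology

theorem forall_mem_ball_of_radial_continuation {E : Type*} [SeminormedAddCommGroup E]
    [ProperSpace E] {P : E → Prop} {R : ℝ}
    (hopen : ∀ z ∈ ball (0 : E) R, P z → ∀ᶠ w in 𝓝 z, P w)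
    (hstep : ∀ r, 0 ≤ r → r < R → (∀ z ∈ ball (0 : E) r, P z) → ∀ z ∈ sphere (0 : E) r, P z) :
    ∀ z ∈ ball (0 : E) R, P z := by
  intro z hz
  by_contra hPz
  rw [mem_ball_zero_iff] at hz
  have hcompact : IsCompact (closedBall (0 : E) ‖z‖ ∩ {w | ¬ P w}) := by
    refine (isCompact_closedBall _ _).of_isClosed_subset (IsSeqClosed.isClosed ?_) inter_subset_left
    intro w w₀ hw hlim
    have hw₀ : w₀ ∈ closedBall (0 : E) ‖z‖ :=
      isClosed_closedBall.mem_of_tendsto hlim (.of_forall fun n => (hw n).1)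
    refine ⟨hw₀, fun hP => ?_⟩
    obtain ⟨n, hn⟩ := (hlim.eventually
      (hopen w₀ (closedBall_subset_ball hz hw₀) hP)).exists
    exact (hw n).2 hn
  obtain ⟨z₀, ⟨hz₀, hPz₀⟩, hmin⟩ :=
    hcompact.exists_isMinOn ⟨z, by simp, hPz⟩ continuous_norm.continuousOn
  rw [mem_closedBall_zero_iff] at hz₀
  refine hPz₀ (hstep ‖z₀‖ (norm_nonneg _) (hz₀.trans_lt hz) (fun w hw => ?_) z₀ (by simp))
  rw [mem_ball_zero_iff] at hw
  by_contra hPw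
  exact hw.not_ge (hmin ⟨mem_closedBall_zero_iff.2 (hw.le.trans hz₀), hPw⟩)

section PositiveRealPart

variable {W : ℂ → ℂ} {r : ℝ} {z₀ : ℂ}

lemma re_nonneg_of_mem_closedBall {z : ℂ} (hr : r ≠ 0) (hc : ContinuousOn W (closedBall 0 r))
    (hpos : ∀ z ∈ ball (0 : ℂ) r, 0 < (W z).re) (hz : z ∈ closedBall (0 : ℂ) r) :
    0 ≤ (W z).re := by
  rw [← closure_ball (0 : ℂ) hr] at hc hz
  exact le_on_closure (fun w hw => (hpos w hw).le) continuousOn_const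
    (continuous_re.comp_continuousOn hc) hz

lemma im_mul_deriv_eq_zero_of_isMinOn_re (hd : DifferentiableAt ℂ W z₀)
    (hmin : IsMinOn (fun z => (W z).re) (sphere 0 ‖z₀‖) z₀) : (z₀ * deriv W z₀).im = 0 := by
  have hcurve : HasDerivAt (fun θ : ℝ => z₀ * exp (θ * I)) (z₀ * I) 0 := by
    simpa using (((hasDerivAt_id (0 : ℝ)).ofReal_comp.mul_const I).cexp).const_mul z₀
  have hW : HasDerivAt W (deriv W z₀) (z₀ * exp ((0 : ℝ) * I)) := by simpa using hd.hasDerivAt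
  have hre : HasDerivAt (fun θ : ℝ => (W (z₀ * exp (θ * I))).re) (deriv W z₀ * (z₀ * I)).re 0 :=
    reCLM.hasFDerivAt.comp_hasDerivAt (0 : ℝ) (hW.comp (0 : ℝ) hcurve)
  have hlocal : IsLocalMin (fun θ : ℝ => (W (z₀ * exp (θ * I))).re) 0 :=
    .of_forall fun θ => by
      simpa using hmin (show z₀ * exp (θ * I) ∈ sphere 0 ‖z₀‖ by
        simp [Complex.norm_exp_ofReal_mul_I])
  have hzero := hlocal.hasDerivAt_eq_zero hre
  rw [← mul_assoc, mul_I_re, neg_eq_zero] at hzero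
  rwa [mul_comm]

lemma norm_one_sub_lt_norm_one_add {w : ℂ} (hw : 0 < w.re) : ‖1 - w‖ < ‖1 + w‖ := by
  refine lt_of_pow_lt_pow_left₀ 2 (norm_nonneg _) ?_
  simp only [← normSq_eq_norm_sq, normSq_apply, sub_re, sub_im, add_re, add_im, one_re, one_im]
  linarith

lemma norm_one_sub_le_div_mul_norm_one_add (hd : DifferentiableOn ℂ W (ball 0 r))
    (hpos : ∀ z ∈ ball (0 : ℂ) r, 0 < (W z).re) (hW0 : W 0 = 1) {z : ℂ}
    (hz : z ∈ ball (0 : ℂ) r) : ‖1 - W z‖ ≤ ‖z‖ / r * ‖1 + W z‖ := by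
  have hnorm_pos : ∀ z ∈ ball (0 : ℂ) r, 0 < ‖1 + W z‖ := fun z hz =>
    (norm_nonneg _).trans_lt (norm_one_sub_lt_norm_one_add (hpos z hz))
  set cayley : ℂ → ℂ := fun z => (1 - W z) / (1 + W z)
  have hcayley0 : cayley 0 = 0 := by simp [cayley, hW0]
  have hdiff : DifferentiableOn ℂ cayley (ball 0 r) :=
    (hd.const_sub 1).div (hd.const_add 1) fun z hz => norm_pos_iff.1 (hnorm_pos z hz)
  have hmaps : MapsTo cayley (ball 0 r) (closedBall (cayley 0) 1) := fun z hz => by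
    rw [hcayley0, mem_closedBall_zero_iff, norm_div, div_le_one (hnorm_pos z hz)]
    exact (norm_one_sub_lt_norm_one_add (hpos z hz)).le
  have hschwarz := dist_le_div_mul_dist_of_mapsTo_ball hdiff hmaps hz
  rwa [hcayley0, dist_zero_right, dist_zero_right, norm_div, div_le_iff₀ (hnorm_pos z hz),
    one_div_mul_eq_div] at hschwarz

lemma ofReal_mul_mem_ball {t : ℝ} {z : ℂ} (ht : t ∈ Ioo (0 : ℝ) 1) (hr : 0 < r)
    (hz : z ∈ closedBall (0 : ℂ) r) : t * z ∈ ball (0 : ℂ) r := by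
  rw [mem_closedBall_zero_iff] at hz
  rw [mem_ball_zero_iff, norm_mul, norm_real, Real.norm_of_nonneg ht.1.le]
  exact (mul_le_mul_of_nonneg_left hz ht.1.le).trans_lt (mul_lt_of_lt_one_left hr ht.2)

lemma re_mul_deriv_le_of_re_pos (hz₀ : z₀ ≠ 0) (hd : DifferentiableOn ℂ W (ball 0 ‖z₀‖))
    (hd₀ : DifferentiableAt ℂ W z₀) (hpos : ∀ z ∈ ball (0 : ℂ) ‖z₀‖, 0 < (W z).re)
    (hW0 : W 0 = 1) {y : ℝ} (hy : W z₀ = I * y) : (z₀ * deriv W z₀).re ≤ -((1 + y ^ 2) / 2) := by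
  have hline : HasDerivAt (fun t : ℝ => (t : ℂ) * z₀) z₀ 1 := by
    simpa using (hasDerivAt_id (1 : ℝ)).ofReal_comp.mul_const z₀
  have hW : HasDerivAt (fun t : ℝ => W (t * z₀)) (deriv W z₀ * z₀) 1 :=
    HasDerivAt.comp (1 : ℝ) (by simpa using hd₀.hasDerivAt) hline
  set φ : ℝ → ℝ := fun t => t ^ 2 * ‖1 + W (t * z₀)‖ ^ 2 - ‖1 - W (t * z₀)‖ ^ 2
  have hφ : HasDerivAt φ (2 * (1 + y ^ 2) + 4 * (z₀ * deriv W z₀).re) 1 := by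
    have h := (((hasDerivAt_id (1 : ℝ)).pow 2).mul (hW.const_add 1).norm_sq).sub
      (hW.const_sub 1).norm_sq
    refine h.congr_deriv ?_
    simp only [hy, id_eq, ofReal_one, one_mul, Pi.pow_apply, ← normSq_eq_norm_sq, normSq_apply,
      Complex.inner, conj_re, conj_im, mul_re, mul_im, add_re, add_im, sub_re, sub_im, neg_re,
      neg_im, one_re, one_im, I_re, I_im, ofReal_re, ofReal_im]
    ring
  have hφ_nonneg : ∀ t ∈ Ioo (0 : ℝ) 1, 0 ≤ φ t := fun t ht => by
    have hmem := ofReal_mul_mem_ball ht (norm_pos_iff.2 hz₀) (z := z₀) (by simp)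
    have hle := norm_one_sub_le_div_mul_norm_one_add hd hpos hW0 hmem
    rw [norm_mul, mul_div_cancel_right₀ _ (norm_ne_zero_iff.2 hz₀), norm_real,
      Real.norm_of_nonneg ht.1.le] at hle
    have := pow_le_pow_left₀ (norm_nonneg _) hle 2
    rw [mul_pow] at this
    exact sub_nonneg.2 this
  have hφ1 : φ 1 = 0 := by
    simp [φ, hy, ← normSq_eq_norm_sq, normSq_apply]
  have hslope := hφ.tendsto_slope.mono_left (nhdsLT_le_nhdsNE (1 : ℝ))
  have hle : 2 * (1 + y ^ 2) + 4 * (z₀ * deriv W z₀).re ≤ 0 := by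
    refine le_of_tendsto hslope ?_
    filter_upwards [Ioo_mem_nhdsLT (zero_lt_one' ℝ)] with t ht
    rw [slope_def_field, hφ1, sub_zero]
    exact div_nonpos_of_nonneg_of_nonpos (hφ_nonneg t ht) (sub_nonpos.2 ht.2.le)
  linarith

theorem exists_le_and_mul_deriv_eq_neg (hz₀ : z₀ ≠ 0)
    (hd : ∀ z ∈ closedBall (0 : ℂ) ‖z₀‖, DifferentiableAt ℂ W z)
    (hpos : ∀ z ∈ ball (0 : ℂ) ‖z₀‖, 0 < (W z).re) (hW0 : W 0 = 1)
    {y : ℝ} (hy : W z₀ = I * y) :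
    ∃ m : ℝ, (1 + y ^ 2) / 2 ≤ m ∧ z₀ * deriv W z₀ = -m := by
  have hd₀ : DifferentiableAt ℂ W z₀ := hd z₀ (by simp)
  have hdiff : DifferentiableOn ℂ W (closedBall 0 ‖z₀‖) := fun z hz =>
    (hd z hz).differentiableWithinAt
  have hmin : IsMinOn (fun z => (W z).re) (sphere 0 ‖z₀‖) z₀ := fun z hz => by
    simpa [hy] using re_nonneg_of_mem_closedBall (norm_ne_zero_iff.2 hz₀) hdiff.continuousOn hpos
      (sphere_subset_closedBall hz)
  have hre := re_mul_deriv_le_of_re_pos hz₀ (hdiff.mono ball_subset_closedBall) hd₀ hpos hW0 hy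
  refine ⟨-(z₀ * deriv W z₀).re, by linarith, Complex.ext (by simp) ?_⟩
  simpa using im_mul_deriv_eq_zero_of_isMinOn_re hd₀ hmin

end PositiveRealPart

/-- The Euler operator `θ = z d/dz`, which multiplies the `n`-th power series coefficient by `n`. -/
noncomputable def eulerOp (F : ℂ → ℂ) (z : ℂ) : ℂ :=
  z * deriv F z

/-- The quantity `1 + z f''(z) / f'(z)`. Its real part is the rate at which the tangent of the
image under `f` of the circle `|w| = |z|` turns, so its positivity expresses convexity. -/
noncomputable def convexityQuotient (f : ℂ → ℂ) (z : ℂ) : ℂ :=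
  1 + eulerOp (deriv f) z / deriv f z

section MillerMocanu

variable {f : ℂ → ℂ} {R : ℝ} {z : ℂ}

@[simp]
lemma convexityQuotient_zero : convexityQuotient f 0 = 1 := by
  simp [convexityQuotient, eulerOp]

lemma differentiableAt_convexityQuotient (hf : DifferentiableOn ℂ f (ball 0 R))
    (hz : z ∈ ball (0 : ℂ) R) (hz' : deriv f z ≠ 0) :
    DifferentiableAt ℂ (convexityQuotient f) z := by
  have hf' : DifferentiableOn ℂ (deriv f) (ball 0 R) := hf.deriv isOpen_ball
  have hball := isOpen_ball.mem_nhds hz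
  exact ((differentiableAt_id.mul ((hf'.deriv isOpen_ball).differentiableAt hball)).div
    (hf'.differentiableAt hball) hz').const_add 1

-- `t ↦ ‖t g(tz)‖²` has derivative `2t ‖g(tz)‖² Re (1 + tz g'(tz) / g(tz))`, so it increases.
lemma ne_zero_of_radial_re_pos {g : ℂ → ℂ} {z : ℂ}
    (hd : ∀ t ∈ Icc (0 : ℝ) 1, DifferentiableAt ℂ g (t * z))
    (h : ∀ t ∈ Ioo (0 : ℝ) 1,
      g (t * z) ≠ 0 ∧ 0 < (1 + t * z * deriv g (t * z) / g (t * z)).re) : g z ≠ 0 := by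
  have hderiv : ∀ t ∈ Icc (0 : ℝ) 1, HasDerivAt (fun t : ℝ => ‖(t : ℂ) * g (t * z)‖ ^ 2)
      (2 * inner ℝ ((t : ℂ) * g (t * z)) (g (t * z) + t * (deriv g (t * z) * z))) t := by
    intro t ht
    have hline : HasDerivAt (fun t : ℝ => (t : ℂ) * z) z t := by
      simpa using (hasDerivAt_id t).ofReal_comp.mul_const z
    have hg : HasDerivAt (fun t : ℝ => g (t * z)) (deriv g (t * z) * z) t :=
      HasDerivAt.comp t (hd t ht).hasDerivAt hline
    simpa using ((hasDerivAt_id t).ofReal_comp.mul hg).norm_sq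
  have hmono : StrictMonoOn (fun t : ℝ => ‖(t : ℂ) * g (t * z)‖ ^ 2) (Icc 0 1) := by
    refine strictMonoOn_of_deriv_pos (convex_Icc 0 1)
      (fun t ht => (hderiv t ht).continuousAt.continuousWithinAt) fun t ht => ?_
    rw [interior_Icc] at ht
    rw [(hderiv t (Ioo_subset_Icc_self ht)).deriv]
    obtain ⟨hne, hpos⟩ := h t ht
    set Q := 1 + t * z * deriv g (t * z) / g (t * z) with hQ
    have hfactor : g (t * z) + t * (deriv g (t * z) * z) = g (t * z) * Q := by
      rw [hQ]; field_simp
    have hinner : inner ℝ (t * g (t * z)) (g (t * z) * Q) = t * (normSq (g (t * z)) * Q.re) := by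
      simp only [Complex.inner, normSq_apply, map_mul, conj_re, conj_im, conj_ofReal, mul_re,
        mul_im, ofReal_re, ofReal_im]
      ring
    rw [hfactor, hinner]
    have := normSq_pos.2 hne
    have := ht.1
    positivity
  intro hgz
  simpa [hgz] using hmono (left_mem_Icc.2 zero_le_one) (right_mem_Icc.2 zero_le_one) zero_lt_one

lemma deriv_ne_zero_of_mem_closedBall {r : ℝ} (hf : DifferentiableOn ℂ f (ball 0 R)) (hr : 0 < r)
    (hrR : r < R) (h : ∀ w ∈ ball (0 : ℂ) r, deriv f w ≠ 0 ∧ 0 < (convexityQuotient f w).re)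
    (hz : z ∈ closedBall (0 : ℂ) r) : deriv f z ≠ 0 := by
  refine ne_zero_of_radial_re_pos (fun t ht => ?_) fun t ht => h _ (ofReal_mul_mem_ball ht hr hz)
  refine (hf.deriv isOpen_ball).differentiableAt (isOpen_ball.mem_nhds ?_)
  simpa using (convex_ball (0 : ℂ) R).smul_mem_of_zero_mem (mem_ball_self (hr.trans hrR))
    (closedBall_subset_ball hrR hz) ht

-- This is the differential-subordination method of Miller and Mocanu: if positivity of the real
-- part first fails at `z`, then there the quotient is `iy` and its Euler derivative is `-m` with
-- `m ≥ (1 + y²) / 2`.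
theorem deriv_ne_zero_and_re_convexityQuotient_pos (hf : DifferentiableOn ℂ f (ball 0 R))
    (hf0 : deriv f 0 ≠ 0)
    (hadm : ∀ z ∈ ball (0 : ℂ) R, deriv f z ≠ 0 → ∀ y m : ℝ, convexityQuotient f z = I * y →
      eulerOp (convexityQuotient f) z = -m → m < (1 + y ^ 2) / 2) :
    ∀ z ∈ ball (0 : ℂ) R, deriv f z ≠ 0 ∧ 0 < (convexityQuotient f z).re := by
  have hQ {z : ℂ} := differentiableAt_convexityQuotient (z := z) hf
  refine forall_mem_ball_of_radial_continuation (fun z hz ⟨hz', hpos⟩ => ?_) ?_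
  · have hcont : ContinuousAt (deriv f) z :=
      ((hf.deriv isOpen_ball).differentiableAt (isOpen_ball.mem_nhds hz)).continuousAt
    exact (hcont.eventually_ne hz').and
      ((continuous_re.continuousAt.comp (hQ hz hz').continuousAt).eventually_const_lt hpos)
  intro r _ hrR hball z hz
  obtain rfl : ‖z‖ = r := mem_sphere_zero_iff_norm.1 hz
  rcases eq_or_ne z 0 with rfl | hz0
  · simpa using hf0
  have hne : ∀ w ∈ closedBall (0 : ℂ) ‖z‖, deriv f w ≠ 0 := fun w hw =>
    deriv_ne_zero_of_mem_closedBall hf (norm_pos_iff.2 hz0) hrR hball hw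
  have hdiff : ∀ w ∈ closedBall (0 : ℂ) ‖z‖, DifferentiableAt ℂ (convexityQuotient f) w :=
    fun w hw => hQ (closedBall_subset_ball hrR hw) (hne w hw)
  have hz' : deriv f z ≠ 0 := hne z (sphere_subset_closedBall hz)
  refine ⟨hz', ?_⟩
  have hnonneg := re_nonneg_of_mem_closedBall (norm_ne_zero_iff.2 hz0)
    (fun w hw => (hdiff w hw).continuousAt.continuousWithinAt) (fun w hw => (hball w hw).2)
    (sphere_subset_closedBall hz)
  refine hnonneg.lt_of_ne fun hre => ?_
  have hy : convexityQuotient f z = I * (convexityQuotient f z).im :=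
    Complex.ext (by simp [← hre]) (by simp)
  obtain ⟨m, hm, hderiv⟩ := exists_le_and_mul_deriv_eq_neg hz0 hdiff (fun w hw => (hball w hw).2)
    convexityQuotient_zero hy
  exact (hadm z (mem_ball_zero_iff.2 hrR) hz' _ m hy hderiv).not_ge hm

end MillerMocanu

section InjectiveHolomorphic

variable {f : ℂ → ℂ} {U : Set ℂ} {z : ℂ}

lemma hasStrictDerivAt_of_differentiableOn (hU : IsOpen U) (hf : DifferentiableOn ℂ f U)
    (hz : z ∈ U) : HasStrictDerivAt f (deriv f z) z :=
  (hf.analyticAt (hU.mem_nhds hz)).hasStrictDerivAt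

lemma exists_mem_nhds_injOn_of_deriv_ne_zero (hU : IsOpen U) (hf : DifferentiableOn ℂ f U)
    (hz : z ∈ U) (hne : deriv f z ≠ 0) : ∃ V ∈ 𝓝 z, InjOn f V := by
  have hstrict :=
    (hasStrictDerivAt_of_differentiableOn hU hf hz).hasStrictFDerivAt_equiv hne
  let e := hstrict.toOpenPartialHomeomorph f
  exact ⟨e.source, e.open_source.mem_nhds hstrict.mem_toOpenPartialHomeomorph_source, e.injOn⟩

lemma isOpen_image_of_deriv_ne_zero (hU : IsOpen U) (hf : DifferentiableOn ℂ f U)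
    (hne : ∀ z ∈ U, deriv f z ≠ 0) : IsOpen (f '' U) := by
  rw [isOpen_iff_mem_nhds]
  rintro _ ⟨z, hz, rfl⟩
  rw [← (hasStrictDerivAt_of_differentiableOn hU hf hz).map_nhds_eq (hne z hz)]
  exact image_mem_map (hU.mem_nhds hz)

lemma hasDerivAt_invFunOn (hU : IsOpen U) (hf : DifferentiableOn ℂ f U) (hinj : InjOn f U)
    (hz : z ∈ U) (hne : deriv f z ≠ 0) :
    HasDerivAt (Function.invFunOn f U) (deriv f z)⁻¹ (f z) := by
  have hstrict := hasStrictDerivAt_of_differentiableOn hU hf hz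
  have hinv : ∀ᶠ w in 𝓝 z, Function.invFunOn f U (f w) = w := by
    filter_upwards [hU.mem_nhds hz] with w hw using hinj.leftInvOn_invFunOn hw
  have hcont : ContinuousAt (Function.invFunOn f U) (f z) := by
    rw [ContinuousAt, hinv.self_of_nhds, ← hstrict.map_nhds_eq hne, tendsto_map'_iff]
    exact tendsto_id.congr' (hinv.mono fun w hw => hw.symm)
  refine HasDerivAt.of_local_left_inverse hcont
    (by rw [hinv.self_of_nhds]; exact hstrict.hasDerivAt) hne ?_
  rw [← hstrict.map_nhds_eq hne, eventually_map]
  filter_upwards [hinv] with w hw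
  rw [hw]

lemma hasDerivAt_invFunOn_lineMap (hU : IsOpen U) (hf : DifferentiableOn ℂ f U)
    (hne : ∀ z ∈ U, deriv f z ≠ 0) (hinj : InjOn f U) {p q : ℂ} {t : ℝ}
    (ht : AffineMap.lineMap p q t ∈ f '' U) :
    HasDerivAt (fun t : ℝ => Function.invFunOn f U (AffineMap.lineMap p q t))
      ((q - p) / deriv f (Function.invFunOn f U (AffineMap.lineMap p q t))) t := by
  obtain ⟨z, hz, hzt⟩ := ht
  have hinv : HasDerivAt (Function.invFunOn f U) (deriv f z)⁻¹ (AffineMap.lineMap p q t) := by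
    rw [← hzt]
    exact hasDerivAt_invFunOn hU hf hinj hz (hne z hz)
  rw [← hzt, hinj.leftInvOn_invFunOn hz, div_eq_inv_mul]
  exact HasDerivAt.comp t hinv AffineMap.hasDerivAt_lineMap

end InjectiveHolomorphic

lemma not_isLocalMax_of_deriv_deriv_pos {φ : ℝ → ℝ} {t : ℝ} (hc : ContinuousAt φ t)
    (h : 0 < deriv (deriv φ) t) : ¬ IsLocalMax φ t := by
  intro hmax
  have hmin := isLocalMin_of_deriv_deriv_pos h hmax.deriv_eq_zero hc
  have hconst : φ =ᶠ[𝓝 t] fun _ => φ t := by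
    filter_upwards [hmin, hmax] with s hle hge using le_antisymm hge hle
  simp [hconst.deriv.deriv_eq] at h

lemma not_isLocalMax_norm_sq {E : Type*} [NormedAddCommGroup E] [InnerProductSpace ℝ E]
    {γ v : ℝ → E} {v' : E} {t : ℝ} (hγ : ∀ᶠ s in 𝓝 t, HasDerivAt γ (v s) s)
    (hv : HasDerivAt v v' t)
    (hpos : inner ℝ (γ t) (v t) = 0 → 0 < ‖v t‖ ^ 2 + inner ℝ (γ t) v') :
    ¬ IsLocalMax (fun s => ‖γ s‖ ^ 2) t := by
  intro hmax
  have hderiv : ∀ᶠ s in 𝓝 t, HasDerivAt (fun s => ‖γ s‖ ^ 2) (2 * inner ℝ (γ s) (v s)) s :=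
    hγ.mono fun s hs => hs.norm_sq
  have hderiv2 : deriv (deriv fun s => ‖γ s‖ ^ 2) t = 2 * (inner ℝ (γ t) v' + ‖v t‖ ^ 2) := by
    have heq : deriv (fun s => ‖γ s‖ ^ 2) =ᶠ[𝓝 t] fun s => 2 * inner ℝ (γ s) (v s) :=
      hderiv.mono fun s hs => hs.deriv
    rw [heq.deriv_eq, ((hγ.self_of_nhds.inner ℝ hv).const_mul 2).deriv, real_inner_self_eq_norm_sq]
  have hcrit := hmax.hasDerivAt_eq_zero hderiv.self_of_nhds
  refine not_isLocalMax_of_deriv_deriv_pos hderiv.self_of_nhds.continuousAt ?_ hmax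
  rw [hderiv2]
  linarith [hpos (by linarith)]

lemma norm_sq_add_inner_pos {v w k : ℂ} (hv : v ≠ 0) (hk : 0 < (1 + w * k).re)
    (horth : inner ℝ w v = 0) : 0 < ‖v‖ ^ 2 + inner ℝ w (-(v ^ 2 * k)) := by
  have hpos := mul_pos (normSq_pos.2 hv) hk
  refine hpos.trans_eq ?_
  simp only [Complex.inner, Complex.sq_norm, normSq_apply, conj_re, conj_im, mul_re, mul_im,
    add_re, neg_re, neg_im, one_re, pow_two v] at horth ⊢
  linear_combination (2 * (v.re * k.re - v.im * k.im)) * horth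

lemma injOn_ball_of_injOn_closedBall {E β : Type*} [SeminormedAddCommGroup E] {f : E → β} {R : ℝ}
    (h : ∀ z ∈ ball (0 : E) R, InjOn f (closedBall 0 ‖z‖)) : InjOn f (ball 0 R) := by
  intro x hx y hy hxy
  rcases le_total ‖x‖ ‖y‖ with hle | hle
  · exact h y hy (by simpa using hle) (by simp) hxy
  · exact h x hx (by simp) (by simpa using hle) hxy

/-- `f` is holomorphic on the disc of radius `R`, its derivative does not vanish there, and the
tangent of the image of each circle `|z| = r < R` turns at positive speed. -/
structure IsLocallyConvex (f : ℂ → ℂ) (R : ℝ) : Prop where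
  differentiableOn : DifferentiableOn ℂ f (ball 0 R)
  deriv_ne_zero : ∀ z ∈ ball (0 : ℂ) R, deriv f z ≠ 0
  re_pos : ∀ z ∈ ball (0 : ℂ) R, 0 < (convexityQuotient f z).re

namespace IsLocallyConvex

variable {f : ℂ → ℂ} {r R : ℝ}

lemma mono (hf : IsLocallyConvex f R) (hrR : r ≤ R) : IsLocallyConvex f r where
  differentiableOn := hf.differentiableOn.mono (ball_subset_ball hrR)
  deriv_ne_zero z hz := hf.deriv_ne_zero z (ball_subset_ball hrR hz)
  re_pos z hz := hf.re_pos z (ball_subset_ball hrR hz)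

lemma isOpen_image (hf : IsLocallyConvex f R) : IsOpen (f '' ball 0 R) :=
  isOpen_image_of_deriv_ne_zero isOpen_ball hf.differentiableOn hf.deriv_ne_zero

lemma continuousAt (hf : IsLocallyConvex f R) {z : ℂ} (hz : z ∈ ball (0 : ℂ) R) :
    ContinuousAt f z :=
  hf.differentiableOn.continuousOn.continuousAt (isOpen_ball.mem_nhds hz)

lemma not_isLocalMax_norm_sq_invFunOn (hf : IsLocallyConvex f R) (hinj : InjOn f (ball 0 R))
    {p q : ℂ} (hpq : p ≠ q) {t : ℝ} (ht : AffineMap.lineMap p q t ∈ f '' ball 0 R) :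
    ¬ IsLocalMax (fun s : ℝ =>
      ‖Function.invFunOn f (ball 0 R) (AffineMap.lineMap p q s)‖ ^ 2) t := by
  set γ : ℝ → ℂ := fun s => Function.invFunOn f (ball 0 R) (AffineMap.lineMap p q s)
  have hγ : ∀ {s : ℝ}, AffineMap.lineMap p q s ∈ f '' ball 0 R →
      HasDerivAt γ ((q - p) / deriv f (γ s)) s := fun hs =>
    hasDerivAt_invFunOn_lineMap isOpen_ball hf.differentiableOn hf.deriv_ne_zero hinj hs
  have hnear : ∀ᶠ s in 𝓝 t, AffineMap.lineMap p q s ∈ f '' ball 0 R :=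
    AffineMap.lineMap_continuous.continuousAt (hf.isOpen_image.mem_nhds ht)
  have hmem : γ t ∈ ball (0 : ℂ) R := Function.invFunOn_mem ht
  have hne := hf.deriv_ne_zero _ hmem
  have hf'' : HasDerivAt (deriv f) (deriv (deriv f) (γ t)) (γ t) :=
    ((hf.differentiableOn.deriv isOpen_ball).differentiableAt
      (isOpen_ball.mem_nhds hmem)).hasDerivAt
  set v := (q - p) / deriv f (γ t) with hv
  have hspeed : HasDerivAt (fun s => (q - p) / deriv f (γ s))
      (-(v ^ 2 * (deriv (deriv f) (γ t) / deriv f (γ t)))) t := by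
    refine ((hasDerivAt_const t (q - p)).div (HasDerivAt.comp t hf'' (hγ ht)) hne).congr_deriv ?_
    rw [hv, Function.comp_apply]
    field_simp
    ring
  refine not_isLocalMax_norm_sq (hnear.mono fun s hs => hγ hs) hspeed fun horth => ?_
  refine norm_sq_add_inner_pos (div_ne_zero (sub_ne_zero.2 hpq.symm) hne) ?_ horth
  rw [← mul_div_assoc]
  exact hf.re_pos _ hmem

lemma segment_subset_image_closedBall (hf : IsLocallyConvex f R) (hinj : InjOn f (ball 0 R))
    {ρ : ℝ} (hρ : ρ < R) {x y : ℂ} (hx : x ∈ closedBall (0 : ℂ) ρ) (hy : y ∈ closedBall (0 : ℂ) ρ)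
    (hseg : segment ℝ (f x) (f y) ⊆ f '' ball 0 R) :
    segment ℝ (f x) (f y) ⊆ f '' closedBall 0 ρ := by
  rcases eq_or_ne (f x) (f y) with hxy | hxy
  · rw [← hxy, segment_same, singleton_subset_iff]
    exact mem_image_of_mem f hx
  rw [segment_eq_image_lineMap] at hseg ⊢
  have hmem : ∀ t ∈ Icc (0 : ℝ) 1, AffineMap.lineMap (f x) (f y) t ∈ f '' ball 0 R := fun t ht =>
    hseg (mem_image_of_mem _ ht)
  set γ : ℝ → ℂ := fun s => Function.invFunOn f (ball 0 R) (AffineMap.lineMap (f x) (f y) s)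
  have hcont : ContinuousOn (fun t => ‖γ t‖ ^ 2) (Icc (0 : ℝ) 1) := fun t ht =>
    (hasDerivAt_invFunOn_lineMap isOpen_ball hf.differentiableOn hf.deriv_ne_zero hinj
      (hmem t ht)).continuousAt.norm.pow 2 |>.continuousWithinAt
  have hend : ∀ {z}, z ∈ closedBall (0 : ℂ) ρ → Function.invFunOn f (ball 0 R) (f z) = z :=
    fun hz => hinj.leftInvOn_invFunOn (closedBall_subset_ball hρ hz)
  obtain ⟨t₀, ht₀, hmax⟩ := isCompact_Icc.exists_isMaxOn ⟨0, left_mem_Icc.2 zero_le_one⟩ hcont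
  have hγt₀ : γ t₀ ∈ closedBall (0 : ℂ) ρ := by
    rcases eq_endpoints_or_mem_Ioo_of_mem_Icc ht₀ with rfl | rfl | hint
    · simpa only [γ, AffineMap.lineMap_apply_zero, hend hx] using hx
    · simpa only [γ, AffineMap.lineMap_apply_one, hend hy] using hy
    · exact absurd (hmax.isLocalMax (Icc_mem_nhds hint.1 hint.2))
        (hf.not_isLocalMax_norm_sq_invFunOn hinj hxy (hmem t₀ ht₀))
  rintro _ ⟨t, ht, rfl⟩
  refine ⟨γ t, ?_, Function.invFunOn_eq (hmem t ht)⟩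
  rw [mem_closedBall_zero_iff] at hγt₀ ⊢
  exact (pow_le_pow_iff_left₀ (norm_nonneg _) (norm_nonneg _) two_ne_zero).1 (hmax ht) |>.trans hγt₀

lemma isOpen_setOf_segment_subset_image (hf : IsLocallyConvex f R) :
    IsOpen {p : ℂ × ℂ | p ∈ ball (0 : ℂ) R ×ˢ ball (0 : ℂ) R ∧
      segment ℝ (f p.1) (f p.2) ⊆ f '' ball 0 R} := by
  simp only [segment_eq_image_lineMap, image_subset_iff]
  rw [isOpen_iff_mem_nhds]
  rintro p ⟨hp, hseg⟩
  refine ((isOpen_ball.prod isOpen_ball).eventually_mem hp).and ?_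
  refine isCompact_Icc.eventually_forall_of_forall_eventually fun t ht => ?_
  have hcont : Tendsto (fun s : (ℂ × ℂ) × ℝ => AffineMap.lineMap (f s.1.1) (f s.1.2) s.2)
      (𝓝 (p, t)) (𝓝 (AffineMap.lineMap (f p.1) (f p.2) t)) :=
    ((hf.continuousAt hp.1).tendsto.comp (continuous_fst.fst.tendsto (p, t))).lineMap
      ((hf.continuousAt hp.2).tendsto.comp (continuous_fst.snd.tendsto (p, t)))
      (continuous_snd.tendsto (p, t))
  exact hcont (hf.isOpen_image.mem_nhds (hseg ht))

lemma segment_subset_image_of_mem_closure (hf : IsLocallyConvex f R) (hinj : InjOn f (ball 0 R))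
    {p : ℂ × ℂ} (hp : p ∈ ball (0 : ℂ) R ×ˢ ball (0 : ℂ) R)
    (hclosure : p ∈ closure {p : ℂ × ℂ | segment ℝ (f p.1) (f p.2) ⊆ f '' ball 0 R}) :
    segment ℝ (f p.1) (f p.2) ⊆ f '' ball 0 R := by
  obtain ⟨ρ, hpρ, hρR⟩ : ∃ ρ, max ‖p.1‖ ‖p.2‖ < ρ ∧ ρ < R :=
    exists_between (max_lt (mem_ball_zero_iff.1 hp.1) (mem_ball_zero_iff.1 hp.2))
  rw [max_lt_iff, ← mem_ball_zero_iff, ← mem_ball_zero_iff] at hpρ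
  have hsub : closedBall (0 : ℂ) ρ ⊆ ball 0 R := closedBall_subset_ball hρR
  have hnear : ∀ᶠ s in 𝓝 p, s ∈ closedBall (0 : ℂ) ρ ×ˢ closedBall (0 : ℂ) ρ :=
    prod_mem_nhds (closedBall_mem_nhds_of_mem hpρ.1) (closedBall_mem_nhds_of_mem hpρ.2)
  have hclosed : IsClosed (f '' closedBall 0 ρ) :=
    ((isCompact_closedBall _ _).image_of_continuousOn
      (hf.differentiableOn.continuousOn.mono hsub)).isClosed
  refine Subset.trans ?_ (image_mono hsub)
  rw [segment_eq_image_lineMap]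
  rintro _ ⟨t, ht, rfl⟩
  have hlim : Tendsto (fun s : ℂ × ℂ => AffineMap.lineMap (f s.1) (f s.2) t) (𝓝 p)
      (𝓝 (AffineMap.lineMap (f p.1) (f p.2) t)) :=
    ((hf.continuousAt hp.1).tendsto.comp (continuous_fst.tendsto p)).lineMap
      ((hf.continuousAt hp.2).tendsto.comp (continuous_snd.tendsto p)) tendsto_const_nhds
  refine hclosed.mem_of_frequently_of_tendsto ?_ hlim
  refine ((mem_closure_iff_frequently.1 hclosure).and_eventually hnear).mono fun s ⟨hsu, hs⟩ => ?_
  refine hf.segment_subset_image_closedBall hinj hρR hs.1 hs.2 hsu ?_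
  rw [segment_eq_image_lineMap]
  exact mem_image_of_mem _ ht

-- The pairs `(x, y)` for which the segment from `f x` to `f y` stays in the image form an open and
-- closed subset of the connected product of two discs.
theorem convex_image (hf : IsLocallyConvex f R) (hinj : InjOn f (ball 0 R)) :
    Convex ℝ (f '' ball 0 R) := by
  rw [convex_iff_segment_subset]
  rintro _ ⟨x, hx, rfl⟩ _ ⟨y, hy, rfl⟩
  set u := {p : ℂ × ℂ | p ∈ ball (0 : ℂ) R ×ˢ ball (0 : ℂ) R ∧
    segment ℝ (f p.1) (f p.2) ⊆ f '' ball 0 R}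
  suffices hsub : ball (0 : ℂ) R ×ˢ ball (0 : ℂ) R ⊆ u from (hsub (mk_mem_prod hx hy)).2
  have hconn : IsPreconnected (ball (0 : ℂ) R ×ˢ ball (0 : ℂ) R) :=
    ((convex_ball _ _).prod (convex_ball _ _)).isPreconnected
  refine hconn.subset_of_closure_inter_subset hf.isOpen_setOf_segment_subset_image
    ⟨(x, x), ⟨hx, hx⟩, ⟨hx, hx⟩, by simpa using ⟨x, by simpa using hx, rfl⟩⟩ ?_
  exact fun p ⟨hpu, hp⟩ =>
    ⟨hp, hf.segment_subset_image_of_mem_closure hinj hp (closure_mono (fun s hs => hs.2) hpu)⟩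

-- The image is convex, so the mean value inequality applies to the inverse function.
lemma exists_norm_sub_le_mul_norm_image_sub (hf : IsLocallyConvex f R) (hr : r < R)
    (hinj : InjOn f (ball 0 r)) :
    ∃ M, ∀ x ∈ ball (0 : ℂ) r, ∀ y ∈ ball (0 : ℂ) r, ‖y - x‖ ≤ M * ‖f y - f x‖ := by
  have hf_r := hf.mono hr.le
  have hf' : ContinuousOn (deriv f) (closedBall 0 r) :=
    (hf.differentiableOn.deriv isOpen_ball).continuousOn.mono (closedBall_subset_ball hr)
  obtain ⟨M, hM⟩ := (isCompact_closedBall (0 : ℂ) r).exists_bound_of_continuousOn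
    (hf'.inv₀ fun z hz => hf.deriv_ne_zero z (closedBall_subset_ball hr hz))
  have hinv : ∀ {z}, z ∈ ball (0 : ℂ) r → Function.invFunOn f (ball 0 r) (f z) = z :=
    fun hz => hinj.leftInvOn_invFunOn hz
  refine ⟨M, fun x hx y hy => ?_⟩
  have hlip := (hf_r.convex_image hinj).norm_image_sub_le_of_norm_hasDerivWithin_le (C := M)
    (f := Function.invFunOn f (ball 0 r))
    (f' := fun w => (deriv f (Function.invFunOn f (ball 0 r) w))⁻¹) ?_ ?_
    (mem_image_of_mem f hx) (mem_image_of_mem f hy)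
  · rwa [hinv hx, hinv hy] at hlip
  · rintro _ ⟨z, hz, rfl⟩
    rw [hinv hz]
    exact (hasDerivAt_invFunOn isOpen_ball hf_r.differentiableOn hinj hz
      (hf_r.deriv_ne_zero z hz)).hasDerivWithinAt
  · rintro _ ⟨z, hz, rfl⟩
    rw [hinv hz]
    exact hM z (ball_subset_closedBall hz)

lemma injOn_closedBall (hf : IsLocallyConvex f R) (hr : r < R) (hinj : InjOn f (ball 0 r)) :
    InjOn f (closedBall 0 r) := by
  rcases le_or_gt r 0 with hr0 | hr0
  · exact (subsingleton_closedBall _ hr0).injOn _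
  obtain ⟨M, hM⟩ := hf.exists_norm_sub_le_mul_norm_image_sub hr hinj
  have hcont : ContinuousOn f (closedBall 0 r) :=
    hf.differentiableOn.continuousOn.mono (closedBall_subset_ball hr)
  have hclosure : closure (ball (0 : ℂ) r ×ˢ ball (0 : ℂ) r) =
      closedBall 0 r ×ˢ closedBall 0 r := by
    rw [closure_prod_eq, closure_ball _ hr0.ne']
  intro x hx y hy hxy
  have hle : ‖y - x‖ ≤ M * ‖f y - f x‖ := by
    refine le_on_closure (s := ball (0 : ℂ) r ×ˢ ball (0 : ℂ) r) (x := (x, y))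
      (f := fun p => ‖p.2 - p.1‖) (g := fun p => M * ‖f p.2 - f p.1‖)
      (fun p hp => hM p.1 hp.1 p.2 hp.2) (by fun_prop) ?_ (hclosure ▸ ⟨hx, hy⟩)
    rw [hclosure]
    exact continuousOn_const.mul ((hcont.comp continuousOn_snd fun p hp => hp.2).sub
      (hcont.comp continuousOn_fst fun p hp => hp.1)).norm
  rw [hxy, sub_self, norm_zero, mul_zero, norm_le_zero_iff, sub_eq_zero] at hle
  exact hle.symm

lemma eventually_injOn_closedBall (hf : IsLocallyConvex f R) {z : ℂ} (hz : z ∈ ball (0 : ℂ) R)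
    (hinj : InjOn f (closedBall 0 ‖z‖)) : ∀ᶠ w in 𝓝 z, InjOn f (closedBall 0 ‖w‖) := by
  have hsub : closedBall (0 : ℂ) ‖z‖ ⊆ ball 0 R :=
    closedBall_subset_ball (mem_ball_zero_iff.1 hz)
  obtain ⟨V, hVopen, hV, hVinj⟩ := hinj.exists_isOpen_superset (isCompact_closedBall _ _)
    (fun x hx => hf.continuousAt (hsub hx))
    (fun x hx => exists_mem_nhds_injOn_of_deriv_ne_zero isOpen_ball hf.differentiableOn (hsub hx)
      (hf.deriv_ne_zero x (hsub hx)))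
  obtain ⟨δ, hδ, hδV⟩ := (isCompact_closedBall (0 : ℂ) ‖z‖).exists_cthickening_subset_open hVopen hV
  rw [cthickening_closedBall hδ.le (norm_nonneg _)] at hδV
  filter_upwards [continuous_norm.continuousAt.eventually_lt_const (lt_add_of_pos_left ‖z‖ hδ)]
    with w hw
  exact hVinj.mono ((closedBall_subset_closedBall hw.le).trans hδV)

theorem injOn (hf : IsLocallyConvex f R) : InjOn f (ball 0 R) := by
  suffices hclosed : ∀ z ∈ ball (0 : ℂ) R, InjOn f (closedBall 0 ‖z‖) from
    injOn_ball_of_injOn_closedBall hclosed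
  refine forall_mem_ball_of_radial_continuation
    (fun z hz hinj => hf.eventually_injOn_closedBall hz hinj) fun r _ hr hball z hz => ?_
  rw [mem_sphere_zero_iff_norm.1 hz]
  exact hf.injOn_closedBall hr (injOn_ball_of_injOn_closedBall hball)

end IsLocallyConvex

section BoundaryEquation

variable {x G : ℝ}

lemma mul_div_sq_add_sq_le_add_sub {E d X Y : ℝ} (hE : E ≤ 2 * d ^ 2) (hE0 : 0 ≤ E) (hd : 0 < d)
    (hX : d ≤ X) : E * X / (X ^ 2 + Y ^ 2) ≤ E * d / (d ^ 2 + Y ^ 2) + (X - d) := by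
  have hX0 : 0 < X := hd.trans_le hX
  have hcross : E * (Y ^ 2 - d * X) ≤ (X ^ 2 + Y ^ 2) * (d ^ 2 + Y ^ 2) :=
    calc E * (Y ^ 2 - d * X) ≤ E * Y ^ 2 := by gcongr; nlinarith
      _ ≤ (d ^ 2 + d ^ 2) * Y ^ 2 := by gcongr; linarith
      _ ≤ (X ^ 2 + d ^ 2) * Y ^ 2 := by gcongr
      _ ≤ (X ^ 2 + Y ^ 2) * (d ^ 2 + Y ^ 2) := by nlinarith [sq_nonneg (X * d), sq_nonneg (Y ^ 2)]
  rw [div_add' _ _ _ (by positivity), div_le_div_iff₀ (by positivity) (by positivity)]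
  linear_combination (X - d) * hcross

lemma boundary_constCoeff_lt (hx0 : 0 ≤ x) (hx : x ≤ 3 / 10)
    (hG : G * (1 + 5 * x) ≤ (1 - x) * (3 + 5 * x)) :
    4 * x * G < ((1 + x) ^ 2 + x * (G + 1 + x) * (1 - x)) * (1 - x) := by
  have hpoly : x * (3 - x) * (3 + 5 * x) < (1 + 2 * x - x ^ 2) * (1 + 5 * x) := by
    linear_combination mul_pos (show 0 < 1 - 3 * x by linarith) (show 0 < 1 + x by linarith)
  have hG' : x * (3 - x) * G < (1 - x) * (1 + 2 * x - x ^ 2) := by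
    refine lt_of_mul_lt_mul_right ?_ (show 0 ≤ 1 + 5 * x by linarith)
    calc x * (3 - x) * G * (1 + 5 * x) = x * (3 - x) * (G * (1 + 5 * x)) := by ring
      _ ≤ x * (3 - x) * ((1 - x) * (3 + 5 * x)) := by
        gcongr; exact mul_nonneg hx0 (by linarith)
      _ = (1 - x) * (x * (3 - x) * (3 + 5 * x)) := by ring
      _ < (1 - x) * ((1 + 2 * x - x ^ 2) * (1 + 5 * x)) := by gcongr; linarith
      _ = (1 - x) * (1 + 2 * x - x ^ 2) * (1 + 5 * x) := by ring
  linear_combination (1 + x) * hG'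

lemma boundary_sqCoeff_le (hx0 : 0 ≤ x) (hx : x ≤ 3 / 10) (hG : x * (3 + 4 * x) ≤ G) :
    4 * x * (1 - x) ≤ G * ((1 - x) ^ 2 + ((1 + x) / (1 + 5 * x)) ^ 2) := by
  have hpoly : 4 * (1 - x) ≤ (3 + 4 * x) * ((1 - x) ^ 2 + ((1 + x) / (1 + 5 * x)) ^ 2) := by
    rw [div_pow, add_div' _ _ _ (by positivity), ← mul_div_assoc, le_div_iff₀ (by positivity)]
    have hx3 : 0 ≤ x ^ 3 * (3 / 10 - x) := mul_nonneg (by positivity) (by linarith)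
    have hx1 : 0 ≤ x * (9 / 100 - x ^ 2) := mul_nonneg hx0 (by nlinarith)
    linarith [sq_nonneg x, pow_nonneg hx0 5]
  calc 4 * x * (1 - x) = x * (4 * (1 - x)) := by ring
    _ ≤ x * ((3 + 4 * x) * ((1 - x) ^ 2 + ((1 + x) / (1 + 5 * x)) ^ 2)) := by gcongr
    _ = x * (3 + 4 * x) * ((1 - x) ^ 2 + ((1 + x) / (1 + 5 * x)) ^ 2) := by ring
    _ ≤ G * ((1 - x) ^ 2 + ((1 + x) / (1 + 5 * x)) ^ 2) := by gcongr

lemma boundary_re_lt {η : ℝ} (hx0 : 0 ≤ x) (hx : x ≤ 3 / 10) (hG0 : 0 < G)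
    (hGle : G * (1 + 5 * x) ≤ (1 - x) * (3 + 5 * x)) (hleG : x * (3 + 4 * x) ≤ G) :
    4 * x * (1 - x) * (G ^ 2 + η ^ 2) <
      G * ((1 + x) ^ 2 + η ^ 2 + x * (G + 1 + x) * (1 - x)) *
        ((1 - x) ^ 2 + (η / (1 + 5 * x)) ^ 2) := by
  have hδ : 0 < 1 - x := by linarith
  have hconst := mul_lt_mul_of_pos_right (boundary_constCoeff_lt hx0 hx hGle) (mul_pos hG0 hδ)
  have hslope := mul_le_mul_of_nonneg_right (boundary_sqCoeff_le hx0 hx hleG) (sq_nonneg η)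
  have hrest : 0 ≤ G * (η ^ 2 + x * (G + 1 + x) * (1 - x)) * (η / (1 + 5 * x)) ^ 2 := by
    positivity
  calc 4 * x * (1 - x) * (G ^ 2 + η ^ 2)
      = 4 * x * G * (G * (1 - x)) + 4 * x * (1 - x) * η ^ 2 := by ring
    _ < ((1 + x) ^ 2 + x * (G + 1 + x) * (1 - x)) * (1 - x) * (G * (1 - x)) +
          G * ((1 - x) ^ 2 + ((1 + x) / (1 + 5 * x)) ^ 2) * η ^ 2 +
          G * (η ^ 2 + x * (G + 1 + x) * (1 - x)) * (η / (1 + 5 * x)) ^ 2 := by linarith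
    _ = _ := by ring

lemma four_mul_div_one_sub_sq_le (hx0 : 0 ≤ x) (hx : x ≤ 3 / 10) :
    4 * x / (1 - x) ^ 2 ≤ 17 / 2 * x := by
  have hsq : (7 / 10) ^ 2 ≤ (1 - x) ^ 2 := pow_le_pow_left₀ (by norm_num) (by linarith) 2
  rw [div_le_iff₀ (by linarith)]
  nlinarith

lemma boundary_im_le {η M T : ℝ} (hx0 : 0 ≤ x) (hT : T ≤ 17 / 2 * x)
    (hM : ((1 + x) ^ 2 + η ^ 2) / 2 ≤ M) :
    (G ^ 2 + η ^ 2) * (2 + T) + x * (G + 1 + x) * G ≤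
      2 * (1 + 5 * x) * (G ^ 2 + η ^ 2 + M) := by
  have hM0 : 0 ≤ M := le_trans (by positivity) hM
  have hHG : x * (G + 1 + x) * G ≤ 3 / 2 * x * (G ^ 2 + η ^ 2) + x * M := by
    have hamgm : (G + 1 + x) * G ≤ 3 / 2 * (G ^ 2 + η ^ 2) + M := by
      nlinarith [sq_nonneg (G - (1 + x)), sq_nonneg η]
    linear_combination x * hamgm
  have hST : (G ^ 2 + η ^ 2) * T ≤ (G ^ 2 + η ^ 2) * (17 / 2 * x) := by gcongr
  linarith [mul_nonneg hx0 hM0]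

lemma nonneg_and_sq_le_of_mul_eq_mul {η Y p q k : ℝ} (hk : 0 < k) (hp : 0 < p) (hpq : p ≤ k * q)
    (h : Y * p = η * q) : 0 ≤ η * Y ∧ (η / k) ^ 2 ≤ Y ^ 2 := by
  have hq : 0 < q := pos_of_mul_pos_right (hp.trans_le hpq) hk.le
  obtain rfl : Y = η * (q / p) := by field_simp; linarith
  have hkpq : 1 / k ≤ q / p := by rw [div_le_div_iff₀ hk hp]; linarith
  constructor
  · calc 0 ≤ η ^ 2 * (q / p) := by positivity
      _ = η * (η * (q / p)) := by ring
  · calc (η / k) ^ 2 = η ^ 2 * (1 / k) ^ 2 := by ring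
      _ ≤ η ^ 2 * (q / p) ^ 2 := by gcongr
      _ = (η * (q / p)) ^ 2 := by ring

lemma re_and_im_of_boundary_eq {η M H d : ℝ} {w : ℂ}
    (h : (G + I * η) * (2 * w - d - I * η - x / w) + M + H * w = 0) :
    (G ^ 2 + η ^ 2) * (2 * w.re - d - x * w.re / (w.re ^ 2 + w.im ^ 2)) + G * M +
        H * (G * w.re + η * w.im) = 0 ∧
      w.im * ((G ^ 2 + η ^ 2) * (2 + x / (w.re ^ 2 + w.im ^ 2)) + H * G) =
        η * (G ^ 2 + η ^ 2 + M + H * w.re) := by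
  have hconj := congrArg (fun s : ℂ => (G - I * η) * s) h
  have hre := congrArg re hconj
  have him := congrArg im hconj
  simp only [mul_re, mul_im, add_re, add_im, sub_re, sub_im, div_re, div_im, normSq_apply,
    ofReal_re, ofReal_im, I_re, I_im, re_ofNat, im_ofNat, zero_re, zero_im] at hre him
  constructor
  · linear_combination hre
  · linear_combination him

lemma nonneg_and_sq_le_of_im_eq {η M X Y : ℝ} (hx0 : 0 ≤ x) (hx : x ≤ 3 / 10) (hG0 : 0 < G)
    (hM : ((1 + x) ^ 2 + η ^ 2) / 2 ≤ M) (hX : (1 - x) / 2 < X)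
    (him : Y * ((G ^ 2 + η ^ 2) * (2 + x / (X ^ 2 + Y ^ 2)) + x * (G + 1 + x) * G) =
      η * (G ^ 2 + η ^ 2 + M + x * (G + 1 + x) * X)) :
    0 ≤ η * Y ∧ (η / (2 * (1 + 5 * x))) ^ 2 ≤ Y ^ 2 := by
  have hδ : 0 < 1 - x := by linarith
  have hX0 : 0 < X := by linarith
  have hN : x / (X ^ 2 + Y ^ 2) ≤ 17 / 2 * x :=
    calc x / (X ^ 2 + Y ^ 2) ≤ x / ((1 - x) / 2) ^ 2 := by gcongr; nlinarith [sq_nonneg Y]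
      _ = 4 * x / (1 - x) ^ 2 := by field_simp; norm_num
      _ ≤ 17 / 2 * x := four_mul_div_one_sub_sq_le hx0 hx
  refine nonneg_and_sq_le_of_mul_eq_mul (by positivity) (by positivity) ?_ him
  calc (G ^ 2 + η ^ 2) * (2 + x / (X ^ 2 + Y ^ 2)) + x * (G + 1 + x) * G
      ≤ 2 * (1 + 5 * x) * (G ^ 2 + η ^ 2 + M) := boundary_im_le hx0 hN hM
    _ ≤ 2 * (1 + 5 * x) * (G ^ 2 + η ^ 2 + M + x * (G + 1 + x) * X) :=
      mul_le_mul_of_nonneg_left (le_add_of_nonneg_right (by positivity)) (by positivity)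

lemma boundary_expr_ne_zero {η M : ℝ} {w : ℂ} (hx0 : 0 ≤ x) (hx : x ≤ 3 / 10) (hG0 : 0 < G)
    (hGle : G * (1 + 5 * x) ≤ (1 - x) * (3 + 5 * x)) (hleG : x * (3 + 4 * x) ≤ G)
    (hM : ((1 + x) ^ 2 + η ^ 2) / 2 ≤ M) (hw : (1 - x) / 2 < w.re) :
    (G + I * η) * (2 * w - (1 - x : ℝ) - I * η - x / w) + M + (x * (G + 1 + x) : ℝ) * w ≠ 0 := by
  intro h
  obtain ⟨hre, him⟩ := re_and_im_of_boundary_eq h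
  obtain ⟨hηY, hY⟩ := nonneg_and_sq_le_of_im_eq hx0 hx hG0 hM hw him
  set H := x * (G + 1 + x) with hH
  set X := w.re
  set Y := w.im
  set d := (1 - x) / 2 with hd
  set κ := η / (2 * (1 + 5 * x)) with hκ
  have hd0 : 0 < d := by linarith
  have hfrac : x * X / (X ^ 2 + Y ^ 2) ≤ x * d / (d ^ 2 + Y ^ 2) + 2 * (X - d) := by
    have := mul_div_sq_add_sq_le_add_sub (E := x / 2) (Y := Y) (by nlinarith) (by positivity)
      hd0 hw.le
    linear_combination 2 * this
  have hupper : G / 2 * ((1 + x) ^ 2 + η ^ 2 + H * (1 - x)) ≤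
      (G ^ 2 + η ^ 2) * (x * d / (d ^ 2 + κ ^ 2)) :=
    calc G / 2 * ((1 + x) ^ 2 + η ^ 2 + H * (1 - x))
        = G * (((1 + x) ^ 2 + η ^ 2) / 2) + H * (G * d) := by ring
      _ ≤ G * M + H * (G * X + η * Y) := by gcongr; nlinarith
      _ = (G ^ 2 + η ^ 2) * (x * X / (X ^ 2 + Y ^ 2) - 2 * (X - d)) := by
        linear_combination hre
      _ ≤ (G ^ 2 + η ^ 2) * (x * d / (d ^ 2 + Y ^ 2)) := by gcongr; linarith
      _ ≤ (G ^ 2 + η ^ 2) * (x * d / (d ^ 2 + κ ^ 2)) := by gcongr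
  rw [← mul_div_assoc, le_div_iff₀ (by positivity)] at hupper
  have hlower := boundary_re_lt (η := η) hx0 hx hG0 hGle hleG
  have hδ : 1 - x = 2 * d := by rw [hd]; ring
  rw [← hH, hδ, show η / (1 + 5 * x) = 2 * κ by rw [hκ]; field_simp] at hlower
  rw [hδ] at hupper
  linarith

-- `hW` and `hm` say that the quotient is `iy` and that its Euler derivative is `-m`; eliminating
-- `q` and substituting `w = 1 + (1 + x) u`, `G = α (1 + x) - x`, `η = (1 + x) y`,
-- `M = (1 + x)² m` gives the equation excluded by `boundary_expr_ne_zero`.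
lemma boundary_eq_of_elimination {α m y : ℝ} {u q : ℂ} (hu : 1 + (1 + x) * u ≠ 0)
    (hW : 1 - α + u + (α + (α + α * x) * u) * q = I * y)
    (hm : u * (1 + u) + (α + α * x) * (u * (1 + u)) * q +
      (α + (α + α * x) * u) * (1 - q * (I * y)) = -m) :
    ((α * (1 + x) - x : ℝ) + I * ((1 + x) * y : ℝ)) *
        (2 * (1 + (1 + x) * u) - (1 - x : ℝ) - I * ((1 + x) * y : ℝ) - x / (1 + (1 + x) * u)) +
      ((1 + x) ^ 2 * m : ℝ) + (x * (α * (1 + x) - x + 1 + x) : ℝ) * (1 + (1 + x) * u) = 0 := by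
  have hcancel : (1 + (1 + x) * u) * (x / (1 + (1 + x) * u)) = x := mul_div_cancel₀ _ hu
  refine (mul_eq_zero.1 ?_).resolve_left hu
  push_cast
  linear_combination (1 + x) ^ 2 * (1 + (1 + x) * u) * hm
    - (1 + x) ^ 2 * ((1 + x) * (u * (1 + u)) - (1 + (1 + x) * u) * (I * y)) * hW
    - (α * (1 + x) - x + I * ((1 + x) * y)) * hcancel

lemma lt_half_one_add_sq_of_boundary_eqs_of_pos {α m y : ℝ} {u q : ℂ} (hα : 0 < α) (hx0 : 0 ≤ x)
    (hxα : 4 * x ≤ α) (hαx : α * (1 + 5 * x) ≤ 3) (hu : -1 / 2 < u.re)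
    (hW : 1 - α + u + (α + (α + α * x) * u) * q = I * y)
    (hm : u * (1 + u) + (α + α * x) * (u * (1 + u)) * q +
      (α + (α + α * x) * u) * (1 - q * (I * y)) = -m) :
    m < (1 + y ^ 2) / 2 := by
  by_contra! hle
  have hx : x ≤ 3 / 10 := by nlinarith
  have hw : (1 - x) / 2 < (1 + (1 + x) * u).re := by
    simp only [add_re, mul_re, add_im, one_re, one_im, ofReal_re, ofReal_im]
    nlinarith
  have hw0 : 1 + (1 + x) * u ≠ 0 := fun h => by
    rw [h, zero_re] at hw
    linarith
  refine boundary_expr_ne_zero (G := α * (1 + x) - x) hx0 hx ?_ ?_ ?_ ?_ hw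
    (boundary_eq_of_elimination hw0 hW hm)
  · nlinarith
  · linear_combination (1 + x) * hαx
  · linear_combination (1 + x) * hxα
  · linear_combination (1 + x) ^ 2 * hle

lemma lt_half_one_add_sq_of_boundary_eqs {α e m y : ℝ} {u q : ℂ} (hα : 0 ≤ α) (he0 : 0 ≤ e)
    (heα : 4 * e ≤ α ^ 2) (hαe : α + 5 * e ≤ 3) (hu : -1 / 2 < u.re)
    (hW : 1 - α + u + (α + (α + e) * u) * q = I * y)
    (hm : u * (1 + u) + (α + e) * (u * (1 + u)) * q +
      (α + (α + e) * u) * (1 - q * (I * y)) = -m) :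
    m < (1 + y ^ 2) / 2 := by
  rcases hα.eq_or_lt with rfl | hα
  · obtain rfl : e = 0 := by linarith
    have hre : 1 + u.re = 0 := by simpa using congrArg re hW
    linarith
  · obtain ⟨x, rfl⟩ : ∃ x, e = α * x := ⟨e / α, by field_simp⟩
    refine lt_half_one_add_sq_of_boundary_eqs_of_pos (x := x) hα
      (nonneg_of_mul_nonneg_right he0 hα) ?_ (by linarith) hu (by exact_mod_cast hW)
      (by exact_mod_cast hm)
    exact le_of_mul_le_mul_left (by linarith) hα

end BoundaryEquation

section PowerSeries

variable {c : ℕ → ℂ} {F : ℂ → ℂ} {R : ℝ} {z : ℂ}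

lemma exists_summable_norm_mul_pow_le
    (hF : ∀ z ∈ ball (0 : ℂ) R, HasSum (fun n => c n * z ^ n) (F z)) (hz : z ∈ ball (0 : ℂ) R) :
    ∃ ρ, z ∈ ball (0 : ℂ) ρ ∧ ∃ u : ℕ → ℝ, Summable u ∧
      ∀ n, ∀ w ∈ ball (0 : ℂ) ρ, w ∈ ball (0 : ℂ) R ∧ ‖c n * w ^ n‖ ≤ u n := by
  obtain ⟨ρ, hzρ, hρR⟩ := exists_between (mem_ball_zero_iff.1 hz)
  have hρ : 0 < ρ := (norm_nonneg z).trans_lt hzρ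
  have hρ_mem : (ρ : ℂ) ∈ ball (0 : ℂ) R := by simpa [abs_of_pos hρ] using hρR
  refine ⟨ρ, mem_ball_zero_iff.2 hzρ, _, (hF ρ hρ_mem).summable.norm, fun n w hw => ?_⟩
  refine ⟨ball_subset_ball hρR.le hw, ?_⟩
  simp only [norm_mul, norm_pow, norm_real, Real.norm_of_nonneg hρ.le]
  have := (mem_ball_zero_iff.1 hw).le
  gcongr

lemma differentiableOn_of_hasSum (hF : ∀ z ∈ ball (0 : ℂ) R, HasSum (fun n => c n * z ^ n) (F z)) :
    DifferentiableOn ℂ F (ball 0 R) := by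
  intro z hz
  obtain ⟨ρ, hzρ, u, hu, hbound⟩ := exists_summable_norm_mul_pow_le hF hz
  have htsum : DifferentiableOn ℂ (fun w => ∑' n, c n * w ^ n) (ball 0 ρ) :=
    differentiableOn_tsum_of_summable_norm hu (fun n => by fun_prop) isOpen_ball
      fun n w hw => (hbound n w hw).2
  have hFρ : DifferentiableOn ℂ F (ball 0 ρ) :=
    htsum.congr fun w hw => (hF w (hbound 0 w hw).1).tsum_eq.symm
  exact (hFρ.differentiableAt (isOpen_ball.mem_nhds hzρ)).differentiableWithinAt

lemma hasSum_eulerOp (hF : ∀ z ∈ ball (0 : ℂ) R, HasSum (fun n => c n * z ^ n) (F z))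
    (hz : z ∈ ball (0 : ℂ) R) : HasSum (fun n : ℕ => n * c n * z ^ n) (eulerOp F z) := by
  obtain ⟨ρ, hzρ, u, hu, hbound⟩ := exists_summable_norm_mul_pow_le hF hz
  have hderiv := hasSum_deriv_of_summable_norm (F := fun n w => c n * w ^ n) hu
    (fun n => by fun_prop) isOpen_ball (fun n w hw => (hbound n w hw).2) hzρ
  have heq : (fun w => ∑' n, c n * w ^ n) =ᶠ[𝓝 z] F :=
    eventually_of_mem (isOpen_ball.mem_nhds hzρ) fun w hw => (hF w (hbound 0 w hw).1).tsum_eq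
  rw [heq.deriv_eq] at hderiv
  rw [eulerOp]
  convert! hderiv.mul_left z using 2 with n
  rcases n with _ | n
  · simp
  · simp only [deriv_const_mul_field, deriv_pow_field, Nat.add_sub_cancel]
    ring

end PowerSeries

section Hypergeometric

variable {a b c : ℝ} {z : ℂ}

lemma one_le_ordinaryHypergeometricSeries_radius (a b c : ℝ) :
    1 ≤ (ordinaryHypergeometricSeries ℂ a b c).radius := by
  by_cases h : ∀ k : ℕ, (k : ℝ) ≠ -a ∧ (k : ℝ) ≠ -b ∧ (k : ℝ) ≠ -c
  · exact (ordinaryHypergeometricSeries_radius_eq_one ℂ a b c h).ge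
  · obtain ⟨k, hk⟩ : ∃ k : ℕ, a = -k ∨ b = -k ∨ c = -k := by
      simpa only [not_forall, ne_eq, ← not_or, not_not, eq_neg_iff_add_eq_zero, add_comm] using h
    rcases hk with rfl | rfl | rfl
    · simp [ordinaryHypergeometric_radius_top_of_neg_nat₁]
    · simp [ordinaryHypergeometric_radius_top_of_neg_nat₂]
    · simp [ordinaryHypergeometric_radius_top_of_neg_nat₃]

lemma hyperF_eq_ordinaryHypergeometric (a b c : ℝ) (z : ℂ) : hyperF a b c z = ₂F₁ a b c z := by
  rw [ordinaryHypergeometric_eq_tsum]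
  refine tsum_congr fun n => ?_
  rw [real_smul]
  congr 2
  field_simp

lemma hasSum_hyperF (a b c : ℝ) (hz : z ∈ ball (0 : ℂ) 1) :
    HasSum (fun n => ((ordinaryHypergeometricCoefficient a b c n : ℝ) : ℂ) * z ^ n)
      (hyperF a b c z) := by
  have hz' : z ∈ eball (0 : ℂ) (ordinaryHypergeometricSeries ℂ a b c).radius :=
    eball_subset_eball (one_le_ordinaryHypergeometricSeries_radius a b c)
      (by simpa [← eball_ofReal] using hz)
  rw [hyperF_eq_ordinaryHypergeometric]
  convert! (ordinaryHypergeometricSeries ℂ a b c).hasSum hz' using 2 with n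
  rw [ordinaryHypergeometricSeries, FormalMultilinearSeries.ofScalars_apply_eq, real_smul]

lemma ordinaryHypergeometricCoefficient_succ (hc : ∀ n : ℕ, c + n ≠ 0) (n : ℕ) :
    (n + 1) * (c + n) * ordinaryHypergeometricCoefficient a b c (n + 1) =
      (a + n) * (b + n) * ordinaryHypergeometricCoefficient a b c n := by
  have hn : (n + 1 : ℝ) ≠ 0 := n.cast_add_one_ne_zero
  simp only [ordinaryHypergeometricCoefficient, ascPochhammer_succ_eval, Nat.factorial_succ,
    Nat.cast_mul, Nat.cast_succ, mul_inv]
  field_simp [hc n]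

lemma hyperF_zero (a b c : ℝ) : hyperF a b c 0 = 1 := by
  rw [hyperF_eq_ordinaryHypergeometric, ordinaryHypergeometric_zero]

lemma differentiableOn_hyperF (a b c : ℝ) : DifferentiableOn ℂ (hyperF a b c) (ball 0 1) :=
  differentiableOn_of_hasSum fun _ hz => hasSum_hyperF a b c hz

lemma hyperF_ode (hc : ∀ n : ℕ, c + n ≠ 0) (hz : z ∈ ball (0 : ℂ) 1) :
    eulerOp (eulerOp (hyperF a b c)) z + (c - 1) * eulerOp (hyperF a b c) z =
      z * (eulerOp (eulerOp (hyperF a b c)) z + (a + b) * eulerOp (hyperF a b c) z +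
        a * b * hyperF a b c z) := by
  have hF := fun w (hw : w ∈ ball (0 : ℂ) 1) => hasSum_hyperF a b c hw
  have hθ := fun w (hw : w ∈ ball (0 : ℂ) 1) => hasSum_eulerOp hF hw
  have hθθ := fun w (hw : w ∈ ball (0 : ℂ) 1) => hasSum_eulerOp hθ hw
  have hleft := (hasSum_nat_add_iff' 1).2 ((hθθ z hz).add ((hθ z hz).mul_left (c - 1 : ℂ)))
  simp only [Finset.sum_range_one, Nat.cast_zero, zero_mul, mul_zero, add_zero, sub_zero] at hleft
  have hright := (((hθθ z hz).add ((hθ z hz).mul_left (a + b : ℂ))).add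
    ((hF z hz).mul_left (a * b : ℂ))).mul_left z
  refine hleft.unique ?_
  convert! hright using 2 with n
  have hrec := congrArg ((↑) : ℝ → ℂ)
    (ordinaryHypergeometricCoefficient_succ (a := a) (b := b) hc n)
  push_cast at hrec ⊢
  linear_combination z ^ (n + 1) * hrec

end Hypergeometric

section MulId

variable {F : ℂ → ℂ} {R : ℝ} {z : ℂ}

lemma deriv_id_mul (hF : DifferentiableAt ℂ F z) :
    deriv (fun w => w * F w) z = F z + eulerOp F z := by
  rw [deriv_fun_mul differentiableAt_fun_id hF, deriv_id'', one_mul, eulerOp]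

lemma eulerOp_deriv_id_mul (hF : DifferentiableOn ℂ F (ball 0 R)) (hz : z ∈ ball (0 : ℂ) R) :
    eulerOp (deriv fun w => w * F w) z = eulerOp F z + eulerOp (eulerOp F) z := by
  have hFz {w} (hw : w ∈ ball (0 : ℂ) R) := hF.differentiableAt (isOpen_ball.mem_nhds hw)
  have hθ : DifferentiableAt ℂ (eulerOp F) z :=
    differentiableAt_id.mul ((hF.deriv isOpen_ball).differentiableAt (isOpen_ball.mem_nhds hz))
  have heq : deriv (fun w => w * F w) =ᶠ[𝓝 z] fun w => F w + eulerOp F w :=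
    eventually_of_mem (isOpen_ball.mem_nhds hz) fun w hw => deriv_id_mul (hFz hw)
  rw [eulerOp, heq.deriv_eq, deriv_fun_add (hFz hz) hθ, mul_add, eulerOp, eulerOp.eq_1 (eulerOp F)]

end MulId

section DivOneSub

variable {z : ℂ}

lemma one_sub_ne_zero_of_mem_ball (hz : z ∈ ball (0 : ℂ) 1) : 1 - z ≠ 0 := by
  rintro h
  simp [← sub_eq_zero.1 h] at hz

lemma neg_half_lt_re_div_one_sub (hz : z ∈ ball (0 : ℂ) 1) : -1 / 2 < (z / (1 - z)).re := by
  have hpos : 0 < normSq (1 - z) := normSq_pos.2 (one_sub_ne_zero_of_mem_ball hz)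
  have hz' : normSq z < 1 := by
    rw [normSq_eq_norm_sq, sq_lt_one_iff₀ (norm_nonneg z)]
    exact mem_ball_zero_iff.1 hz
  rw [div_re, ← add_div, lt_div_iff₀ hpos]
  simp only [normSq_apply, sub_re, sub_im, one_re, one_im] at hz' ⊢
  linarith

lemma hasDerivAt_div_one_sub (hz : 1 - z ≠ 0) :
    HasDerivAt (fun w => w / (1 - w)) (1 / (1 - z) ^ 2) z := by
  convert! (hasDerivAt_id z).div ((hasDerivAt_id z).const_sub 1) hz using 1
  simp

end DivOneSub

section ConvexityQuotient

variable {F f : ℂ → ℂ} {α e : ℝ} {z : ℂ}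

lemma eulerOp_div_deriv (hF : DifferentiableAt ℂ F z) (hf'' : DifferentiableAt ℂ (deriv f) z)
    (hf' : deriv f z = F z + eulerOp F z) (hz : deriv f z ≠ 0) :
    eulerOp (fun w => F w / deriv f w) z = 1 - F z / deriv f z * convexityQuotient f z := by
  rw [eulerOp] at hf'
  rw [eulerOp, deriv_fun_div hF hf'' hz, convexityQuotient, eulerOp]
  field_simp
  linear_combination -deriv f z * hf'

lemma convexityQuotient_eq_of_ode
    (hode : eulerOp (deriv f) z + α * (deriv f z - F z) =
      z * (eulerOp (deriv f) z + (α + 1) * deriv f z + e * F z))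
    (hz1 : 1 - z ≠ 0) (hz : deriv f z ≠ 0) :
    convexityQuotient f z =
      1 - α + z / (1 - z) + (α + (α + e) * (z / (1 - z))) * (F z / deriv f z) := by
  rw [convexityQuotient]
  field_simp
  linear_combination hode

lemma eulerOp_eq_of_eventuallyEq {Q q : ℂ → ℂ} (hq : DifferentiableAt ℂ q z) (hz : 1 - z ≠ 0)
    (hQ : Q =ᶠ[𝓝 z] fun w => 1 - α + w / (1 - w) + (α + (α + e) * (w / (1 - w))) * q w) :
    eulerOp Q z = z / (1 - z) * (1 + z / (1 - z)) +
      (α + e) * (z / (1 - z) * (1 + z / (1 - z))) * q z +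
        (α + (α + e) * (z / (1 - z))) * eulerOp q z := by
  have hu := hasDerivAt_div_one_sub hz
  have hderiv := (hu.const_add (1 - α : ℂ)).fun_add
    (((hu.const_mul (α + e : ℂ)).const_add (α : ℂ)).fun_mul hq.hasDerivAt)
  have hzu : z * (1 / (1 - z) ^ 2) = z / (1 - z) * (1 + z / (1 - z)) := by
    field_simp
    ring
  rw [eulerOp, hQ.deriv_eq, eulerOp, ← hzu, hderiv.deriv]
  ring

theorem isLocallyConvex_id_mul_of_ode (hF : DifferentiableOn ℂ F (ball 0 1)) (hF0 : F 0 ≠ 0)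
    (hode : ∀ z ∈ ball (0 : ℂ) 1,
      eulerOp (deriv fun w => w * F w) z + α * (deriv (fun w => w * F w) z - F z) =
        z * (eulerOp (deriv fun w => w * F w) z + (α + 1) * deriv (fun w => w * F w) z + e * F z))
    (hα : 0 ≤ α) (he : 0 ≤ e) (heα : 4 * e ≤ α ^ 2) (hαe : α + 5 * e ≤ 3) :
    IsLocallyConvex (fun w => w * F w) 1 := by
  have hFd {z : ℂ} (hz : z ∈ ball (0 : ℂ) 1) := hF.differentiableAt (isOpen_ball.mem_nhds hz)
  set f : ℂ → ℂ := fun w => w * F w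
  have hf : DifferentiableOn ℂ f (ball 0 1) := differentiableOn_id.mul hF
  have hf' {z : ℂ} (hz : z ∈ ball (0 : ℂ) 1) :=
    (hf.deriv isOpen_ball).differentiableAt (isOpen_ball.mem_nhds hz)
  have hf0 : deriv f 0 ≠ 0 := by
    rw [deriv_id_mul (hFd (mem_ball_self one_pos))]
    simpa [eulerOp] using hF0
  have hpos := deriv_ne_zero_and_re_convexityQuotient_pos hf hf0 fun z hz hz' y m hQ hm => by
    have hz1 := one_sub_ne_zero_of_mem_ball hz
    have hQz := convexityQuotient_eq_of_ode (hode z hz) hz1 hz'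
    have hev : convexityQuotient f =ᶠ[𝓝 z] fun w =>
        1 - α + w / (1 - w) + (α + (α + e) * (w / (1 - w))) * (F w / deriv f w) := by
      filter_upwards [isOpen_ball.mem_nhds hz,
          (hf' hz).continuousAt.eventually_ne hz'] with w hw hw'
      exact convexityQuotient_eq_of_ode (hode w hw) (one_sub_ne_zero_of_mem_ball hw) hw'
    refine lt_half_one_add_sq_of_boundary_eqs hα he heα hαe (neg_half_lt_re_div_one_sub hz)
      (hQz.symm.trans hQ) ?_
    rw [← hm, ← hQ, ← eulerOp_div_deriv (hFd hz) (hf' hz) (deriv_id_mul (hFd hz)) hz',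
      eulerOp_eq_of_eventuallyEq ((hFd hz).fun_div (hf' hz) hz') hz1 hev]
  exact ⟨hf, fun z hz => (hpos z hz).1, fun z hz => (hpos z hz).2⟩

end ConvexityQuotient

lemma eulerOp_deriv_id_mul_hyperF {a b c : ℝ} {z : ℂ} (hc : ∀ n : ℕ, c + n ≠ 0)
    (hz : z ∈ ball (0 : ℂ) 1) :
    eulerOp (deriv fun w => w * hyperF a b c w) z +
        (c - 2) * (deriv (fun w => w * hyperF a b c w) z - hyperF a b c z) =
      z * (eulerOp (deriv fun w => w * hyperF a b c w) z +
        (a + b - 1) * deriv (fun w => w * hyperF a b c w) z +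
          (a - 1) * (b - 1) * hyperF a b c z) := by
  have hF := differentiableOn_hyperF a b c
  rw [eulerOp_deriv_id_mul hF hz, deriv_id_mul (hF.differentiableAt (isOpen_ball.mem_nhds hz))]
  linear_combination hyperF_ode (a := a) (b := b) hc hz

theorem stmt_2_general (a b : ℝ) (ha : 1 ≤ a) (hb : 1 ≤ b) (hab : 5 * (a * b) ≤ 4 * (a + b)) :
    InjOn (fun z : ℂ => z * hyperF a b (a + b) z) (ball (0 : ℂ) 1) ∧
      Convex ℝ ((fun z : ℂ => z * hyperF a b (a + b) z) '' ball (0 : ℂ) 1) := by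
  have hc : ∀ n : ℕ, a + b + n ≠ 0 := fun n => by positivity
  have hconv : IsLocallyConvex (fun z => z * hyperF a b (a + b) z) 1 := by
    refine isLocallyConvex_id_mul_of_ode (α := a + b - 2) (e := (a - 1) * (b - 1))
      (differentiableOn_hyperF a b _) (by simp [hyperF_zero]) (fun z hz => ?_) (by linarith)
      (mul_nonneg (by linarith) (by linarith)) (by nlinarith [sq_nonneg (a - b)]) (by linarith)
    have hode := eulerOp_deriv_id_mul_hyperF (a := a) (b := b) hc hz
    push_cast at hode ⊢
    linear_combination hode
  exact ⟨hconv.injOn, hconv.convex_image hconv.injOn⟩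

theorem stmt_2 (a b : ℝ)
    (h : (a = 1 ∧ 1 ≤ b ∧ b ≤ 4) ∨
         (1 < a ∧ a ≤ b ∧ b ≤ 3 ∧ b ≤ 1 + a ∧ b ≤ 4 * a / (5 * a - 4))) :
    Set.InjOn (fun z : ℂ => z * hyperF a b (a + b) z) (Metric.ball (0 : ℂ) 1) ∧
    Convex ℝ ((fun z : ℂ => z * hyperF a b (a + b) z) '' Metric.ball (0 : ℂ) 1) := by
  rcases h with ⟨rfl, hb, hb4⟩ | ⟨ha, hab, -, -, hb⟩
  · exact stmt_2_general 1 b le_rfl hb (by linarith)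
  · rw [le_div_iff₀ (by linarith)] at hb
    exact stmt_2_general a b ha.le (by linarith) (by linarith)
end

section
/- Let a and b be real constants such that either (1) a = 1 and 1 ≤ b ≤ 4, or (2) 1 < a ≤ b and b ≤ 3 and b ≤ 1 + a and b ≤ 4a/(5a − 4). Then the supremum of Im(z F(a,b;a+b;z)) over z ∈ 𝔻 equals exactly π/(2 B(a,b)); in particular, the bounding lines Im w = ±π/(2B(a,b)) of the image strip are optimal. -/
open Complex Filter MeasureTheory Metric Set

/-!
Write `Aₖ` for the coefficient of `zᵏ` in `F(a, b; a + b; z)` and `L = 1 / B(a, b)`, so that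
`(k + 1) Aₖ → L` by Euler's limit formula for `Γ`, and compare `z F(a, b; a + b; z) = ∑ Aₖ zᵏ⁺¹`
with `-L log (1 - z) = ∑ L / (k + 1) zᵏ⁺¹`, whose imaginary part `-L arg (1 - z)` is bounded by
`L π / 2`.

When `a, b ≥ 1` and `(a - 1)(b - 1) ≤ 3`, both sequences `L / (k + 1) ± Aₖ` are nonnegative,
decreasing and convex. Sine series with such coefficients are nonnegative on `[0, π]`, because two
summations by parts leave only the sums `∑_{j ≤ k} ∑_{i ≤ j} sin ((i + 1) θ)`, which are
nonnegative. Hence `|Im (z F)| ≤ -L arg (1 - z)` on the upper half disc.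

The bound is attained in the limit: `Aₖ - L / (k + 1) = o(1 / k)`, so on a ray into `1` making an
angle `φ < π / 2` with the radius an Abelian argument gives `Im (z F) → L φ`.
-/

open Asymptotics ProbabilityTheory
open scoped Topology ComplexConjugate

/-- Nonnegative, nonincreasing, convex real sequences: the coefficient sequences whose sine series
are nonnegative on `[0, π]`. Convexity is encoded by second differences. -/
structure NonnegAntitoneConvex (u : ℕ → ℝ) : Prop where
  nonneg (k : ℕ) : 0 ≤ u k
  antitone : Antitone u
  convex (k : ℕ) : 0 ≤ u k - 2 * u (k + 1) + u (k + 2)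

namespace NonnegAntitoneConvex

variable {u v : ℕ → ℝ}

lemma mul (hu : NonnegAntitoneConvex u) (hv : NonnegAntitoneConvex v) :
    NonnegAntitoneConvex fun k => u k * v k where
  nonneg k := mul_nonneg (hu.nonneg k) (hv.nonneg k)
  antitone _ _ hij := mul_le_mul (hu.antitone hij) (hv.antitone hij) (hv.nonneg _) (hu.nonneg _)
  convex k := by
    have hconvex_left := mul_nonneg (hu.convex k) (hv.nonneg k)
    have hconvex_right := mul_nonneg (hu.nonneg (k + 2)) (hv.convex k)
    have hcross := mul_nonneg (sub_nonneg.2 (hu.antitone (k + 1).le_succ))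
      (sub_nonneg.2 (hv.antitone k.le_succ))
    simp only [Nat.succ_eq_add_one, add_assoc, Nat.reduceAdd] at hcross
    linear_combination hconvex_left + hconvex_right + 2 * hcross

lemma pow {r : ℝ} (hr₀ : 0 ≤ r) (hr₁ : r ≤ 1) : NonnegAntitoneConvex fun k => r ^ k where
  nonneg _ := pow_nonneg hr₀ _
  antitone := pow_right_anti₀ hr₀ hr₁
  convex k := by
    have h : 0 ≤ r ^ k * (1 - r) ^ 2 := by positivity
    linear_combination h

lemma one_div_add_one : NonnegAntitoneConvex fun k => 1 / ((k : ℝ) + 1) where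
  nonneg _ := by positivity
  antitone _ _ hij := by dsimp only; gcongr
  convex k := by
    have h : 0 ≤ 2 / (((k : ℝ) + 1) * (k + 2) * (k + 3)) := by positivity
    convert h using 1
    push_cast
    field_simp
    ring

lemma isBigO_one (hu : NonnegAntitoneConvex u) : u =O[atTop] fun _ => (1 : ℝ) :=
  .of_bound (u 0) <| .of_forall fun k => by
    simpa [abs_of_nonneg (hu.nonneg k)] using hu.antitone k.zero_le

end NonnegAntitoneConvex

section SineSeries

lemma abs_sin_nat_mul_le (n : ℕ) (θ : ℝ) : |Real.sin (n * θ)| ≤ n * |Real.sin θ| := by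
  induction n with
  | zero => simp
  | succ n ih =>
    calc |Real.sin ((n + 1 : ℕ) * θ)|
        = |Real.sin (n * θ) * Real.cos θ + Real.cos (n * θ) * Real.sin θ| := by
          rw [← Real.sin_add]; push_cast; ring_nf
      _ ≤ |Real.sin (n * θ)| * |Real.cos θ| + |Real.cos (n * θ)| * |Real.sin θ| := by
          rw [← abs_mul, ← abs_mul]; exact abs_add_le _ _
      _ ≤ |Real.sin (n * θ)| * 1 + 1 * |Real.sin θ| := by
          gcongr <;> exact Real.abs_cos_le_one _
      _ ≤ (n + 1 : ℕ) * |Real.sin θ| := by push_cast; linarith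

lemma sum_mul_eq_sum_second_diff_mul {R : Type*} [CommRing R] (v s : ℕ → R) (n : ℕ) :
    ∑ k ∈ Finset.range n, v k * s k =
      ∑ k ∈ Finset.range n, (v k - 2 * v (k + 1) + v (k + 2)) *
          ∑ j ∈ Finset.range (k + 1), ∑ i ∈ Finset.range (j + 1), s i
        + (v n - v (n + 1)) * ∑ j ∈ Finset.range n, ∑ i ∈ Finset.range (j + 1), s i
        + v n * ∑ i ∈ Finset.range n, s i := by
  induction n with
  | zero => simp
  | succ n ih =>
    rw [Finset.sum_range_succ, ih, Finset.sum_range_succ (n := n)]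
    simp only [Finset.sum_range_succ _ n]
    ring

lemma two_mul_one_sub_cos_mul_sum_sin (θ : ℝ) (n : ℕ) :
    2 * (1 - Real.cos θ) * ∑ i ∈ Finset.range n, Real.sin ((i + 1 : ℕ) * θ) =
      Real.sin θ + Real.sin (n * θ) - Real.sin ((n + 1 : ℕ) * θ) := by
  induction n with
  | zero => simp
  | succ n ih =>
    have hnext : Real.sin ((n + 1 + 1 : ℕ) * θ) + Real.sin (n * θ) =
        2 * Real.cos θ * Real.sin ((n + 1 : ℕ) * θ) := by
      have hadd : ((n + 1 + 1 : ℕ) : ℝ) * θ = (n + 1 : ℕ) * θ + θ := by push_cast; ring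
      have hsub : (n : ℝ) * θ = (n + 1 : ℕ) * θ - θ := by push_cast; ring
      rw [hadd, hsub, Real.sin_add, Real.sin_sub]
      ring
    rw [Finset.sum_range_succ, mul_add, ih]
    linear_combination hnext

lemma two_mul_one_sub_cos_mul_sum_sum_sin (θ : ℝ) (n : ℕ) :
    2 * (1 - Real.cos θ) *
        ∑ j ∈ Finset.range n, ∑ i ∈ Finset.range (j + 1), Real.sin ((i + 1 : ℕ) * θ) =
      (n + 1 : ℕ) * Real.sin θ - Real.sin ((n + 1 : ℕ) * θ) := by
  induction n with
  | zero => simp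
  | succ n ih =>
    rw [Finset.sum_range_succ, mul_add, ih, two_mul_one_sub_cos_mul_sum_sin]
    push_cast
    ring

lemma sum_sum_sin_nonneg {θ : ℝ} (hθ : 0 ≤ Real.sin θ) (n : ℕ) :
    0 ≤ ∑ j ∈ Finset.range n, ∑ i ∈ Finset.range (j + 1), Real.sin ((i + 1 : ℕ) * θ) := by
  rcases (Real.cos_le_one θ).eq_or_lt with hcos | hcos
  · have hsin : Real.sin θ = 0 := by nlinarith [Real.sin_sq_add_cos_sq θ]
    have hsin_mul (m : ℕ) : Real.sin (m * θ) = 0 := by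
      simpa [hsin] using abs_sin_nat_mul_le m θ
    simp only [hsin_mul, Finset.sum_const_zero, le_refl]
  · refine nonneg_of_mul_nonneg_right (a := 2 * (1 - Real.cos θ)) ?_ (by linarith)
    rw [two_mul_one_sub_cos_mul_sum_sum_sin, sub_nonneg]
    simpa [abs_of_nonneg hθ] using (le_abs_self _).trans (abs_sin_nat_mul_le (n + 1) θ)

lemma NonnegAntitoneConvex.neg_nat_mul_le_sum_mul_sin {v : ℕ → ℝ} (hv : NonnegAntitoneConvex v)
    {θ : ℝ} (hθ : 0 ≤ Real.sin θ) (n : ℕ) :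
    -(n * v n) ≤ ∑ k ∈ Finset.range n, v k * Real.sin ((k + 1 : ℕ) * θ) := by
  have hsum : -(n : ℝ) ≤ ∑ i ∈ Finset.range n, Real.sin ((i + 1 : ℕ) * θ) := by
    simpa using Finset.card_nsmul_le_sum (Finset.range n)
      (fun i => Real.sin ((i + 1 : ℕ) * θ)) (-1) fun i _ => Real.neg_one_le_sin _
  have hmain := Finset.sum_nonneg fun k (_ : k ∈ Finset.range n) =>
    mul_nonneg (hv.convex k) (sum_sum_sin_nonneg hθ (k + 1))
  have hedge := mul_nonneg (sub_nonneg.2 (hv.antitone n.le_succ)) (sum_sum_sin_nonneg hθ n)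
  rw [sum_mul_eq_sum_second_diff_mul]
  linarith [mul_le_mul_of_nonneg_left hsum (hv.nonneg n)]

lemma NonnegAntitoneConvex.tsum_mul_sin_nonneg {v : ℕ → ℝ} (hv : NonnegAntitoneConvex v)
    (hlim : Tendsto (fun n : ℕ => n * v n) atTop (𝓝 0)) {θ : ℝ} (hθ : 0 ≤ Real.sin θ)
    (hsum : Summable fun k => v k * Real.sin ((k + 1 : ℕ) * θ)) :
    0 ≤ ∑' k, v k * Real.sin ((k + 1 : ℕ) * θ) :=
  le_of_tendsto_of_tendsto' (by simpa using hlim.neg) hsum.hasSum.tendsto_sum_nat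
    (hv.neg_nat_mul_le_sum_mul_sin hθ)

end SineSeries

section PowerSeries

lemma im_pow_eq_norm_pow_mul_sin (z : ℂ) (n : ℕ) :
    (z ^ n).im = ‖z‖ ^ n * Real.sin (n * z.arg) := by
  conv_lhs => rw [← norm_mul_exp_arg_mul_I z, mul_pow, ← Complex.exp_nat_mul, ← ofReal_pow,
    im_ofReal_mul, ← mul_assoc]
  exact_mod_cast congrArg (‖z‖ ^ n * ·) (exp_ofReal_mul_I_im (n * z.arg))

lemma abs_im_pow_succ_le (z : ℂ) (n : ℕ) :
    |(z ^ (n + 1)).im| ≤ (n + 1) * ‖z‖ ^ n * |z.im| := by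
  have him : z.im = ‖z‖ * Real.sin z.arg := (norm_mul_sin_arg z).symm
  calc |(z ^ (n + 1)).im| = ‖z‖ ^ (n + 1) * |Real.sin ((n + 1 : ℕ) * z.arg)| := by
        rw [im_pow_eq_norm_pow_mul_sin, abs_mul, abs_of_nonneg (by positivity)]
    _ ≤ ‖z‖ ^ (n + 1) * ((n + 1 : ℕ) * |Real.sin z.arg|) := by
        gcongr; exact abs_sin_nat_mul_le _ _
    _ = (n + 1) * ‖z‖ ^ n * |z.im| := by
        rw [him, abs_mul, abs_norm]; push_cast; ring

lemma summable_mul_pow_of_isBigO_one {𝕜 : Type*} [NormedField 𝕜] [CompleteSpace 𝕜] {u : ℕ → 𝕜}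
    (hu : u =O[atTop] fun _ => (1 : ℝ)) {z : 𝕜} (hz : ‖z‖ < 1) :
    Summable fun k => u k * z ^ k :=
  summable_of_isBigO_nat (summable_geometric_of_lt_one (norm_nonneg z) hz) <| by
    simpa using hu.mul (isBigO_of_le atTop fun k => by simp : (z ^ ·) =O[atTop] (‖z‖ ^ ·))

/-- The power series `∑ uₖ zᵏ⁺¹` with real coefficients `u₀, u₁, …` and no constant term. -/
noncomputable def shiftedSeries (u : ℕ → ℝ) (z : ℂ) : ℂ :=
  ∑' k, (u k : ℂ) * z ^ (k + 1)

variable {u : ℕ → ℝ} {z : ℂ} {L : ℝ}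

lemma hasSum_shiftedSeries (hu : u =O[atTop] fun _ => (1 : ℝ)) (hz : ‖z‖ < 1) :
    HasSum (fun k => (u k : ℂ) * z ^ (k + 1)) (shiftedSeries u z) := by
  have hu' : (fun k => (u k : ℂ)) =O[atTop] fun _ => (1 : ℝ) := by
    rw [← isBigO_norm_left] at hu ⊢
    simpa using hu
  refine Summable.hasSum ?_
  simpa only [pow_succ, mul_assoc] using (summable_mul_pow_of_isBigO_one hu' hz).mul_right z

lemma hasSum_im_shiftedSeries (hu : u =O[atTop] fun _ => (1 : ℝ)) (hz : ‖z‖ < 1) :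
    HasSum (fun k => u k * (z ^ (k + 1)).im) (shiftedSeries u z).im := by
  simpa only [im_ofReal_mul] using Complex.hasSum_im (hasSum_shiftedSeries hu hz)

lemma shiftedSeries_conj (u : ℕ → ℝ) (z : ℂ) :
    shiftedSeries u (conj z) = conj (shiftedSeries u z) := by
  simp [shiftedSeries, conj_tsum]

lemma shiftedSeries_neg (u : ℕ → ℝ) (z : ℂ) : shiftedSeries (-u) z = -shiftedSeries u z := by
  simp [shiftedSeries, tsum_neg]

lemma hasSum_const_div_add_one (L : ℝ) (hz : ‖z‖ < 1) :
    HasSum (fun k : ℕ => ((L / (k + 1) : ℝ) : ℂ) * z ^ (k + 1)) (-(L * log (1 - z))) := by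
  have h := (hasSum_taylorSeries_neg_log' hz).mul_left (L : ℂ)
  rw [mul_neg] at h
  refine h.congr_fun fun k => ?_
  push_cast
  ring

lemma NonnegAntitoneConvex.im_shiftedSeries_nonneg (hu : NonnegAntitoneConvex u) (hz : ‖z‖ < 1)
    (him : 0 ≤ z.im) : 0 ≤ (shiftedSeries u z).im := by
  have hnorm : ‖(‖z‖ : ℝ)‖ < 1 := by rwa [norm_norm]
  have hsin : 0 ≤ Real.sin z.arg :=
    Real.sin_nonneg_of_nonneg_of_le_pi (arg_nonneg_iff.2 him) (arg_le_pi z)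
  have hterm (k : ℕ) : u k * (z ^ (k + 1)).im =
      ‖z‖ * (u k * ‖z‖ ^ k * Real.sin ((k + 1 : ℕ) * z.arg)) := by
    rw [im_pow_eq_norm_pow_mul_sin]; ring
  have hlim : Tendsto (fun n : ℕ => n * (u n * ‖z‖ ^ n)) atTop (𝓝 0) := by
    have hgeom := (summable_pow_mul_geometric_of_norm_lt_one 1 hnorm).tendsto_atTop_zero
    refine (hgeom.zero_mul_isBoundedUnder_le hu.isBigO_one.isBoundedUnder_le).congr fun n => ?_
    ring
  have hsum : Summable fun k => u k * ‖z‖ ^ k * Real.sin ((k + 1 : ℕ) * z.arg) := by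
    refine (summable_mul_pow_of_isBigO_one hu.isBigO_one hnorm).norm.of_norm_bounded fun k => ?_
    rw [norm_mul _ (Real.sin _)]
    exact mul_le_of_le_one_right (norm_nonneg _) (Real.abs_sin_le_one _)
  rw [← (hasSum_im_shiftedSeries hu.isBigO_one hz).tsum_eq, tsum_congr hterm, tsum_mul_left]
  exact mul_nonneg (norm_nonneg z)
    ((hu.mul (.pow (norm_nonneg z) hz.le)).tsum_mul_sin_nonneg hlim hsin hsum)

lemma im_shiftedSeries_const_div_add (hu : u =O[atTop] fun _ => (1 : ℝ)) (hz : ‖z‖ < 1) (L : ℝ) :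
    (shiftedSeries (fun k => L / (k + 1) + u k) z).im =
      (shiftedSeries u z).im - L * (1 - z).arg := by
  have heq : shiftedSeries (fun k => L / (k + 1) + u k) z =
      -(L * log (1 - z)) + shiftedSeries u z := by
    rw [← ((hasSum_const_div_add_one L hz).add (hasSum_shiftedSeries hu hz)).tsum_eq]
    simp only [shiftedSeries, ofReal_add, add_mul]
  rw [heq, add_im, neg_im, im_ofReal_mul, log_im]
  ring

lemma mul_arg_one_sub_le_im_shiftedSeries (hu : u =O[atTop] fun _ => (1 : ℝ))
    (hadd : NonnegAntitoneConvex fun k => L / (k + 1) + u k) (hz : ‖z‖ < 1) (him : 0 ≤ z.im) :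
    L * (1 - z).arg ≤ (shiftedSeries u z).im := by
  simpa only [im_shiftedSeries_const_div_add hu hz, sub_nonneg] using
    hadd.im_shiftedSeries_nonneg hz him

lemma abs_arg_one_sub_le_pi_div_two (hz : ‖z‖ ≤ 1) : |(1 - z).arg| ≤ Real.pi / 2 :=
  abs_arg_le_pi_div_two_iff.2 (by simpa using (re_le_norm z).trans hz)

lemma abs_im_shiftedSeries_le (hsub : NonnegAntitoneConvex fun k => L / (k + 1) - u k)
    (hadd : NonnegAntitoneConvex fun k => L / (k + 1) + u k) (hz : ‖z‖ < 1) :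
    |(shiftedSeries u z).im| ≤ L * (Real.pi / 2) := by
  wlog him : 0 ≤ z.im generalizing z
  · have h := this (z := conj z) (by rwa [norm_conj]) (by rw [conj_im]; linarith)
    rwa [shiftedSeries_conj, conj_im, abs_neg] at h
  have hu : u =O[atTop] fun _ => (1 : ℝ) :=
    ((hadd.isBigO_one.sub hsub.isBigO_one).const_mul_left (1 / 2)).congr_left fun k => by ring
  have hL : 0 ≤ L := by linarith [hsub.nonneg 0, hadd.nonneg 0]
  have hlower := mul_arg_one_sub_le_im_shiftedSeries hu hadd hz him
  have hupper := mul_arg_one_sub_le_im_shiftedSeries (u := -u) hu.neg_left hsub hz him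
  rw [shiftedSeries_neg, neg_im] at hupper
  have harg := mul_le_mul_of_nonneg_left
    (neg_le_of_abs_le (abs_arg_one_sub_le_pi_div_two hz.le)) hL
  exact abs_le.2 ⟨by linarith, by linarith⟩

lemma isBigO_one_of_add_one_mul (hu : (fun k : ℕ => (k + 1) * u k) =O[atTop] fun _ => (1 : ℝ)) :
    u =O[atTop] fun _ => (1 : ℝ) := by
  refine (IsBigO.of_bound' (.of_forall fun k => ?_)).trans hu
  rw [norm_mul, Real.norm_of_nonneg (by positivity : (0 : ℝ) ≤ k + 1)]
  exact le_mul_of_one_le_left (norm_nonneg _) (by linarith [k.cast_nonneg (α := ℝ)])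

lemma abs_im_shiftedSeries_le_tsum (hu : (fun k : ℕ => (k + 1) * u k) =O[atTop] fun _ => (1 : ℝ))
    (hz : ‖z‖ < 1) :
    |(shiftedSeries u z).im| ≤ |z.im| * ∑' k : ℕ, |(k + 1) * u k| * ‖z‖ ^ k := by
  have hbound : Summable fun k : ℕ => |z.im| * (|(k + 1) * u k| * ‖z‖ ^ k) :=
    (summable_mul_pow_of_isBigO_one hu.norm_left (by rwa [norm_norm])).mul_left _
  have hterm (k : ℕ) : ‖u k * (z ^ (k + 1)).im‖ ≤ |z.im| * (|(k + 1) * u k| * ‖z‖ ^ k) := by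
    calc ‖u k * (z ^ (k + 1)).im‖ = |u k| * |(z ^ (k + 1)).im| := norm_mul _ _
      _ ≤ |u k| * ((k + 1) * ‖z‖ ^ k * |z.im|) := by gcongr; exact abs_im_pow_succ_le z k
      _ = |z.im| * (|(k + 1) * u k| * ‖z‖ ^ k) := by
        rw [abs_mul, abs_of_nonneg (by positivity : (0 : ℝ) ≤ k + 1)]; ring
  rw [← (hasSum_im_shiftedSeries (isBigO_one_of_add_one_mul hu) hz).tsum_eq, ← tsum_mul_left]
  exact tsum_of_norm_bounded hbound.hasSum hterm

/-- By Abel's limit theorem for `∑ (dₖ₊₁ - dₖ) rᵏ`, whose partial sums at `r = 1` telescope. -/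
lemma tendsto_one_sub_mul_tsum_mul_pow {d : ℕ → ℝ} {l : ℝ} (hd : Tendsto d atTop (𝓝 l)) :
    Tendsto (fun r : ℝ => (1 - r) * ∑' k, d k * r ^ k) (𝓝[<] 1) (𝓝 l) := by
  have htele : Tendsto (fun n => ∑ k ∈ Finset.range n, (d (k + 1) - d k)) atTop (𝓝 (l - d 0)) := by
    simpa only [Finset.sum_range_sub] using hd.sub_const (d 0)
  have hid : Tendsto (fun r : ℝ => r) (𝓝[<] 1) (𝓝 1) := tendsto_id.mono_left nhdsWithin_le_nhds
  have habel := (hid.mul (Real.tendsto_tsum_powerSeries_nhdsWithin_lt htele)).const_add (d 0)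
  rw [one_mul, add_sub_cancel] at habel
  refine habel.congr' ?_
  filter_upwards [Ioo_mem_nhdsLT (zero_lt_one' ℝ)] with r hr
  have hnorm : ‖r‖ < 1 := by rw [Real.norm_of_nonneg hr.1.le]; exact hr.2
  have hsum := summable_mul_pow_of_isBigO_one (hd.isBigO_one ℝ) hnorm
  have hsum_succ : Summable fun k => d (k + 1) * r ^ k :=
    summable_mul_pow_of_isBigO_one ((hd.comp (tendsto_add_atTop_nat 1)).isBigO_one ℝ) hnorm
  have hshift : ∑' k, d k * r ^ k = d 0 + r * ∑' k, d (k + 1) * r ^ k := by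
    rw [hsum.tsum_eq_zero_add, ← tsum_mul_left]
    simp only [pow_zero, mul_one, pow_succ]
    congr! 3
    ring
  simp only [sub_mul]
  rw [hsum_succ.tsum_sub hsum]
  linear_combination -hshift

lemma tendsto_im_shiftedSeries_stolzSet (hu : Tendsto (fun k : ℕ => (k + 1) * u k) atTop (𝓝 0))
    (M : ℝ) : Tendsto (fun z => (shiftedSeries u z).im) (𝓝[stolzSet M] 1) (𝓝 0) := by
  have hnorm : Tendsto (fun z : ℂ => ‖z‖) (𝓝[stolzSet M] 1) (𝓝[<] 1) :=
    tendsto_nhdsWithin_iff.2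
      ⟨by simpa using (continuous_norm.tendsto (1 : ℂ)).mono_left nhdsWithin_le_nhds,
        eventually_mem_nhdsWithin.mono fun z hz => hz.1⟩
  have hmean := ((tendsto_one_sub_mul_tsum_mul_pow
    (by simpa using hu.abs : Tendsto (fun k : ℕ => |(k + 1) * u k|) atTop (𝓝 0))).comp
      hnorm).const_mul M
  rw [mul_zero] at hmean
  refine squeeze_zero_norm' ?_ hmean
  filter_upwards [self_mem_nhdsWithin] with z hz
  have him : |z.im| ≤ M * (1 - ‖z‖) := by
    simpa using (abs_im_le_norm (1 - z)).trans hz.2.le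
  calc |(shiftedSeries u z).im|
      ≤ |z.im| * ∑' k : ℕ, |(k + 1) * u k| * ‖z‖ ^ k :=
        abs_im_shiftedSeries_le_tsum (hu.isBigO_one ℝ) hz.1
    _ ≤ M * (1 - ‖z‖) * ∑' k : ℕ, |(k + 1) * u k| * ‖z‖ ^ k := by gcongr
    _ = _ := mul_assoc _ _ _

lemma tendsto_im_shiftedSeries_add_mul_arg
    (hu : Tendsto (fun k : ℕ => (k + 1) * u k) atTop (𝓝 L)) (M : ℝ) :
    Tendsto (fun z => (shiftedSeries u z).im + L * (1 - z).arg) (𝓝[stolzSet M] 1) (𝓝 0) := by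
  have hdiff : Tendsto (fun k : ℕ => (k + 1) * (-L / (k + 1) + u k)) atTop (𝓝 0) := by
    rw [← sub_self L]
    refine (hu.sub_const L).congr fun k => ?_
    field_simp
    ring
  refine (tendsto_im_shiftedSeries_stolzSet hdiff M).congr' ?_
  filter_upwards [self_mem_nhdsWithin] with z hz
  rw [im_shiftedSeries_const_div_add (isBigO_one_of_add_one_mul (hu.isBigO_one ℝ)) hz.1]
  ring

lemma arg_one_sub_ofReal_mul_I (t : ℝ) : (1 - t * I : ℂ).arg = -Real.arctan t := by
  have hre : 0 < (1 - t * I : ℂ).re := by simp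
  have harg := abs_lt.1 (abs_arg_lt_pi_div_two_iff.2 (Or.inl hre))
  rw [← Real.arctan_neg]
  refine (Real.arctan_eq_of_tan_eq ?_ harg).symm
  simp [tan_arg]

lemma exists_tendsto_ray_stolzSet (t : ℝ) :
    ∃ M, Tendsto (fun s : ℝ => (1 - s * (1 - t * I) : ℂ)) (𝓝[>] 0) (𝓝[stolzSet M] 1) := by
  obtain ⟨M, hM⟩ := nhdsWithin_stolzCone_le_nhdsWithin_stolzSet (by positivity : 0 < |t| + 1)
  refine ⟨M, (tendsto_nhdsWithin_iff.2 ⟨?_, ?_⟩).mono_right hM⟩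
  · refine Tendsto.mono_left ?_ nhdsWithin_le_nhds
    exact Continuous.tendsto' (by fun_prop) _ _ (by simp)
  · filter_upwards [self_mem_nhdsWithin] with s (hs : 0 < s)
    suffices s * |t| < (|t| + 1) * s by simpa [stolzCone, abs_mul, abs_of_pos hs]
    linarith

lemma tendsto_im_shiftedSeries_ray
    (hu : Tendsto (fun k : ℕ => (k + 1) * u k) atTop (𝓝 L)) (t : ℝ) :
    Tendsto (fun s : ℝ => (shiftedSeries u (1 - s * (1 - t * I))).im) (𝓝[>] 0)
      (𝓝 (L * Real.arctan t)) := by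
  obtain ⟨M, hM⟩ := exists_tendsto_ray_stolzSet t
  have h := ((tendsto_im_shiftedSeries_add_mul_arg hu M).comp hM).add_const (L * Real.arctan t)
  rw [zero_add] at h
  refine h.congr' ?_
  filter_upwards [self_mem_nhdsWithin] with s (hs : 0 < s)
  simp only [Function.comp_apply, sub_sub_cancel, arg_real_mul _ hs, arg_one_sub_ofReal_mul_I]
  ring

theorem isLUB_im_shiftedSeries (hu : Tendsto (fun k : ℕ => (k + 1) * u k) atTop (𝓝 L))
    (hsub : NonnegAntitoneConvex fun k => L / (k + 1) - u k)
    (hadd : NonnegAntitoneConvex fun k => L / (k + 1) + u k) :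
    IsLUB ((fun z => (shiftedSeries u z).im) '' ball 0 1) (L * (Real.pi / 2)) := by
  constructor
  · rintro _ ⟨z, hz, rfl⟩
    exact (le_abs_self _).trans (abs_im_shiftedSeries_le hsub hadd (mem_ball_zero_iff.1 hz))
  · intro B hB
    have harctan (t : ℝ) : L * Real.arctan t ≤ B := by
      obtain ⟨M, hM⟩ := exists_tendsto_ray_stolzSet t
      refine le_of_tendsto (tendsto_im_shiftedSeries_ray hu t) ?_
      filter_upwards [hM self_mem_nhdsWithin] with s hs
      exact hB ⟨_, mem_ball_zero_iff.2 hs.1, rfl⟩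
    have hlim := (Real.tendsto_arctan_atTop.mono_right nhdsWithin_le_nhds).const_mul L
    exact le_of_tendsto' hlim harctan

end PowerSeries

section Hypergeometric

/-- The Taylor coefficient `(a)ₙ (b)ₙ / ((c)ₙ n!)` of the hypergeometric function `hyperF a b c`. -/
noncomputable def hyperCoeff (a b c : ℝ) (n : ℕ) : ℝ :=
  (ascPochhammer ℝ n).eval a * (ascPochhammer ℝ n).eval b /
    ((ascPochhammer ℝ n).eval c * (n.factorial : ℝ))

lemma mul_hyperF_eq_shiftedSeries (a b c : ℝ) (z : ℂ) :
    z * hyperF a b c z = shiftedSeries (hyperCoeff a b c) z := by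
  rw [hyperF, shiftedSeries, ← tsum_mul_left]
  exact tsum_congr fun n => by rw [hyperCoeff, pow_succ]; ring

variable {a b c : ℝ}

lemma hyperCoeff_pos (ha : 0 < a) (hb : 0 < b) (hc : 0 < c) (n : ℕ) : 0 < hyperCoeff a b c n := by
  have := ascPochhammer_pos n a ha
  have := ascPochhammer_pos n b hb
  have := ascPochhammer_pos n c hc
  unfold hyperCoeff
  positivity

lemma hyperCoeff_succ (a b c : ℝ) (n : ℕ) :
    hyperCoeff a b c (n + 1) =
      hyperCoeff a b c n * ((a + n) * (b + n) / ((c + n) * (n + 1))) := by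
  simp only [hyperCoeff, ascPochhammer_succ_eval, Nat.factorial_succ]
  push_cast
  rw [div_mul_div_comm]
  ring_nf

lemma prod_range_add_eq_ascPochhammer_eval (s : ℝ) (n : ℕ) :
    ∏ j ∈ Finset.range n, (s + j) = (ascPochhammer ℝ n).eval s := by
  induction n with
  | zero => simp
  | succ n ih => rw [Finset.prod_range_succ, ih, ascPochhammer_succ_eval]

lemma GammaSeq_eq_div_ascPochhammer_eval (s : ℝ) (n : ℕ) :
    Real.GammaSeq s n = n ^ s * n.factorial / (ascPochhammer ℝ (n + 1)).eval s := by
  rw [Real.GammaSeq, prod_range_add_eq_ascPochhammer_eval]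

lemma tendsto_add_one_mul_hyperCoeff (ha : 0 < a) (hb : 0 < b) :
    Tendsto (fun k : ℕ => (k + 1) * hyperCoeff a b (a + b) k) atTop (𝓝 (1 / beta a b)) := by
  rw [← tendsto_add_atTop_iff_nat 1, beta, one_div_div]
  have hgamma := (Real.GammaSeq_tendsto_Gamma (a + b)).div
    ((Real.GammaSeq_tendsto_Gamma a).mul (Real.GammaSeq_tendsto_Gamma b))
    (mul_pos (Real.Gamma_pos_of_pos ha) (Real.Gamma_pos_of_pos hb)).ne'
  have hone : Tendsto (fun n : ℕ => 1 + 1 / ((n : ℝ) + 1)) atTop (𝓝 1) := by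
    simpa using tendsto_one_div_add_atTop_nhds_zero_nat.const_add (1 : ℝ)
  rw [← mul_one (Real.Gamma (a + b) / _)]
  refine (hgamma.mul hone).congr' ?_
  filter_upwards [eventually_gt_atTop 0] with n hn
  have hn' : (0 : ℝ) < n := by exact_mod_cast hn
  have := ascPochhammer_pos (n + 1) a ha
  have := ascPochhammer_pos (n + 1) b hb
  have := ascPochhammer_pos (n + 1) (a + b) (by positivity)
  simp only [Pi.div_apply, GammaSeq_eq_div_ascPochhammer_eval, hyperCoeff,
    Real.rpow_add hn', Nat.factorial_succ]
  push_cast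
  field_simp

lemma add_one_mul_hyperCoeff_succ_sub (ha : 0 < a) (hb : 0 < b) (k : ℕ) :
    (k + 2) * hyperCoeff a b (a + b) (k + 1) - (k + 1) * hyperCoeff a b (a + b) k =
      hyperCoeff a b (a + b) k *
        (((a * b - 1) * (k + 1) + (a - 1) * (b - 1)) / ((a + b + k) * (k + 1))) := by
  rw [hyperCoeff_succ]
  have : a + b + k ≠ 0 := by positivity
  field_simp
  ring

lemma monotone_add_one_mul_hyperCoeff (ha : 1 ≤ a) (hb : 1 ≤ b) :
    Monotone fun k : ℕ => (k + 1) * hyperCoeff a b (a + b) k := by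
  refine monotone_nat_of_le_succ fun k => ?_
  have hcoeff : 0 < hyperCoeff a b (a + b) k :=
    hyperCoeff_pos (by linarith) (by linarith) (by linarith) k
  have hab : 0 ≤ a * b - 1 := by nlinarith
  have : 0 ≤ (a - 1) * (b - 1) := mul_nonneg (by linarith) (by linarith)
  have hdiff : 0 ≤ (k + 2) * hyperCoeff a b (a + b) (k + 1) -
      (k + 1) * hyperCoeff a b (a + b) k := by
    rw [add_one_mul_hyperCoeff_succ_sub (by linarith) (by linarith)]
    positivity
  push_cast
  linarith

lemma add_one_mul_hyperCoeff_le (ha : 1 ≤ a) (hb : 1 ≤ b) (k : ℕ) :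
    (k + 1) * hyperCoeff a b (a + b) k ≤ 1 / beta a b :=
  (monotone_add_one_mul_hyperCoeff ha hb).ge_of_tendsto
    (tendsto_add_one_mul_hyperCoeff (by linarith) (by linarith)) k

lemma two_mul_add_one_mul_hyperCoeff_succ_sub (ha : 0 < a) (hb : 0 < b) (k : ℕ) :
    2 * ((k + 2) * hyperCoeff a b (a + b) (k + 1)) - (k + 1) * hyperCoeff a b (a + b) k -
        (k + 3) * hyperCoeff a b (a + b) (k + 2) =
      hyperCoeff a b (a + b) k *
        ((2 * (a * b - 1) * k ^ 2 +
          ((a * b - 1) * (6 - (a - 1) * (b - 1)) + 3 * ((a - 1) * (b - 1))) * k +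
          ((a - 1) * (b - 1) * (5 - 2 * ((a - 1) * (b - 1))) +
            (a * b - 1) * (4 - (a - 1) * (b - 1)))) /
          ((a + b + k) * (k + 1) * (a + b + k + 1) * (k + 2))) := by
  rw [hyperCoeff_succ _ _ _ (k + 1), hyperCoeff_succ]
  push_cast
  field_simp
  ring

lemma hyperCoeff_succ_sub (ha : 0 < a) (hb : 0 < b) (k : ℕ) :
    hyperCoeff a b (a + b) (k + 1) - hyperCoeff a b (a + b) k =
      hyperCoeff a b (a + b) k *
        (((a - 1) * (b - 1) - (k + 1)) / ((a + b + k) * (k + 1))) := by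
  rw [hyperCoeff_succ]
  field_simp
  ring

lemma hyperCoeff_second_diff (ha : 0 < a) (hb : 0 < b) (k : ℕ) :
    hyperCoeff a b (a + b) k - 2 * hyperCoeff a b (a + b) (k + 1) + hyperCoeff a b (a + b) (k + 2) =
      hyperCoeff a b (a + b) k *
        ((2 * k ^ 2 + (6 - 4 * ((a - 1) * (b - 1))) * k +
          (1 - (a - 1) * (b - 1)) * (4 - (a - 1) * (b - 1)) - (a - 1) * (b - 1) * (a + b)) /
          ((a + b + k) * (k + 1) * (a + b + k + 1) * (k + 2))) := by
  rw [hyperCoeff_succ _ _ _ (k + 1), hyperCoeff_succ]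
  push_cast
  field_simp
  ring

lemma nonnegAntitoneConvex_sub_add_one_mul_hyperCoeff (ha : 1 ≤ a) (hb : 1 ≤ b)
    (hab : (a - 1) * (b - 1) ≤ 3) :
    NonnegAntitoneConvex fun k : ℕ => 1 / beta a b - (k + 1) * hyperCoeff a b (a + b) k where
  nonneg k := sub_nonneg.2 (add_one_mul_hyperCoeff_le ha hb k)
  antitone _ _ hij := sub_le_sub_left (monotone_add_one_mul_hyperCoeff ha hb hij) _
  convex k := by
    have hcoeff : 0 < hyperCoeff a b (a + b) k :=
      hyperCoeff_pos (by linarith) (by linarith) (by linarith) k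
    have hm : 0 ≤ (a - 1) * (b - 1) := mul_nonneg (by linarith) (by linarith)
    have hle : (a - 1) * (b - 1) ≤ a * b - 1 := by linarith
    have hlinear : 0 ≤ (a * b - 1) * (6 - (a - 1) * (b - 1)) + 3 * ((a - 1) * (b - 1)) := by
      nlinarith
    have hconst : 0 ≤ (a - 1) * (b - 1) * (5 - 2 * ((a - 1) * (b - 1))) +
        (a * b - 1) * (4 - (a - 1) * (b - 1)) := by
      nlinarith [mul_le_mul_of_nonneg_right hle (by linarith : 0 ≤ 4 - (a - 1) * (b - 1)),
        mul_nonneg hm (by linarith : 0 ≤ 3 - (a - 1) * (b - 1))]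
    have hprod : 0 ≤ a * b - 1 := hm.trans hle
    have hconcave : 0 ≤ 2 * ((k + 2) * hyperCoeff a b (a + b) (k + 1)) -
        (k + 1) * hyperCoeff a b (a + b) k - (k + 3) * hyperCoeff a b (a + b) (k + 2) := by
      rw [two_mul_add_one_mul_hyperCoeff_succ_sub (by linarith) (by linarith)]
      positivity
    push_cast
    linarith

lemma nonnegAntitoneConvex_sub_hyperCoeff (ha : 1 ≤ a) (hb : 1 ≤ b)
    (hab : (a - 1) * (b - 1) ≤ 3) :
    NonnegAntitoneConvex fun k : ℕ => 1 / beta a b / (k + 1) - hyperCoeff a b (a + b) k := by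
  convert (nonnegAntitoneConvex_sub_add_one_mul_hyperCoeff ha hb hab).mul .one_div_add_one
    using 2 with k
  field_simp

lemma hyperCoeff_succ_sub_le (ha : 1 ≤ a) (hb : 1 ≤ b) (hab : (a - 1) * (b - 1) ≤ 3) (k : ℕ) :
    hyperCoeff a b (a + b) (k + 1) - hyperCoeff a b (a + b) k ≤
      hyperCoeff a b (a + b) k / (k + 2) := by
  have hcoeff : 0 < hyperCoeff a b (a + b) k :=
    hyperCoeff_pos (by linarith) (by linarith) (by linarith) k
  have hconst : 2 * ((a - 1) * (b - 1)) ≤ a + b + 2 := by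
    nlinarith [sq_nonneg (a - b)]
  have hnum : ((a - 1) * (b - 1) - (k + 1)) * (k + 2) ≤ (a + b + k) * (k + 1) := by
    nlinarith [k.cast_nonneg (α := ℝ)]
  rw [hyperCoeff_succ_sub (by linarith) (by linarith), div_eq_mul_one_div _ ((k : ℝ) + 2)]
  refine mul_le_mul_of_nonneg_left ?_ hcoeff.le
  rwa [div_le_div_iff₀ (by positivity) (by positivity), one_mul]

lemma second_diff_numerator_nonneg {m s x : ℝ} (hm : m ≤ 3) (hs : 0 ≤ s) (hsm : 4 * m ≤ s ^ 2)
    (hx : 0 ≤ x) :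
    0 ≤ (2 * x ^ 2 + (6 - 4 * m) * x + (1 - m) * (4 - m) - m * (s + 2)) * (x + 3) +
      2 * (s + 2 + x) * (s + 3 + x) * (x + 1) := by
  nlinarith [mul_nonneg hs (sub_nonneg.2 hm), mul_nonneg hx (mul_nonneg hs (sub_nonneg.2 hm)),
    mul_nonneg hx (sub_nonneg.2 hsm), mul_nonneg (sq_nonneg x) (sub_nonneg.2 hm),
    sq_nonneg (m - 13 / 6), mul_nonneg hx (sq_nonneg (m - 11 / 2)), pow_nonneg hx 3,
    mul_nonneg hx hs, mul_nonneg (sq_nonneg x) hs]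

lemma neg_two_mul_le_hyperCoeff_second_diff (ha : 1 ≤ a) (hb : 1 ≤ b)
    (hab : (a - 1) * (b - 1) ≤ 3) (k : ℕ) :
    -(2 * hyperCoeff a b (a + b) k / ((k + 2) * (k + 3))) ≤
      hyperCoeff a b (a + b) k - 2 * hyperCoeff a b (a + b) (k + 1) +
        hyperCoeff a b (a + b) (k + 2) := by
  have hcoeff : 0 < hyperCoeff a b (a + b) k :=
    hyperCoeff_pos (by linarith) (by linarith) (by linarith) k
  have hnum := second_diff_numerator_nonneg (m := (a - 1) * (b - 1)) (s := a + b - 2) hab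
    (by linarith) (by linarith [sq_nonneg (a - b)]) (k.cast_nonneg (α := ℝ))
  rw [← sub_nonneg, hyperCoeff_second_diff (by linarith) (by linarith)]
  have hquot := mul_nonneg hcoeff.le (div_nonneg hnum
    (by positivity : 0 ≤ (a + b + k) * (k + 1) * (a + b + k + 1) * (k + 2) * (k + 3)))
  refine hquot.trans_eq ?_
  field_simp
  ring

lemma nonnegAntitoneConvex_add_hyperCoeff (ha : 1 ≤ a) (hb : 1 ≤ b)
    (hab : (a - 1) * (b - 1) ≤ 3) :
    NonnegAntitoneConvex fun k : ℕ => 1 / beta a b / (k + 1) + hyperCoeff a b (a + b) k := by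
  have hcoeff (k : ℕ) : 0 < hyperCoeff a b (a + b) k :=
    hyperCoeff_pos (by linarith) (by linarith) (by linarith) k
  have hle (k : ℕ) : hyperCoeff a b (a + b) k ≤ 1 / beta a b / (k + 1) := by
    rw [le_div_iff₀ (by positivity), mul_comm]
    exact add_one_mul_hyperCoeff_le ha hb k
  refine ⟨fun k => ?_, antitone_nat_of_succ_le fun k => ?_, fun k => ?_⟩
  · exact add_nonneg ((hcoeff k).le.trans (hle k)) (hcoeff k).le
  · have hdiff : 1 / beta a b / (k + 1) - 1 / beta a b / (k + 2) =
        1 / beta a b / (k + 1) / (k + 2) := by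
      field_simp
      ring
    have hcompare := div_le_div_of_nonneg_right (hle k) (by positivity : (0 : ℝ) ≤ k + 2)
    push_cast
    rw [add_assoc, one_add_one_eq_two]
    linarith [hyperCoeff_succ_sub_le ha hb hab k]
  · have hdiff : 1 / beta a b / (k + 1) - 2 * (1 / beta a b / (k + 2)) + 1 / beta a b / (k + 3) =
        2 * (1 / beta a b / (k + 1)) / ((k + 2) * (k + 3)) := by
      field_simp
      ring
    have hcompare := div_le_div_of_nonneg_right (mul_le_mul_of_nonneg_left (hle k) zero_le_two)
      (by positivity : (0 : ℝ) ≤ (k + 2) * (k + 3))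
    push_cast
    rw [add_assoc (k : ℝ), one_add_one_eq_two, add_assoc (k : ℝ), two_add_one_eq_three]
    linarith [neg_two_mul_le_hyperCoeff_second_diff ha hb hab k]

lemma sub_one_mul_sub_one_le_three (ha : 1 ≤ a) (hab : a ≤ b) (hb : b ≤ 3)
    (hb' : b ≤ 4 * a / (5 * a - 4)) : (a - 1) * (b - 1) ≤ 3 := by
  have ha' : a ≤ 8 / 5 := by
    rw [le_div_iff₀ (by linarith)] at hb'
    nlinarith
  nlinarith

end Hypergeometric

theorem stmt_4_general {a b : ℝ} (ha : 1 ≤ a) (hb : 1 ≤ b) (hab : (a - 1) * (b - 1) ≤ 3) :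
    IsLUB ((fun z : ℂ => (z * hyperF a b (a + b) z).im) '' ball 0 1)
      (Real.pi / (2 * beta a b)) := by
  have hvalue : Real.pi / (2 * beta a b) = 1 / beta a b * (Real.pi / 2) := by ring
  simp only [hvalue, mul_hyperF_eq_shiftedSeries]
  exact isLUB_im_shiftedSeries (tendsto_add_one_mul_hyperCoeff (by linarith) (by linarith))
    (nonnegAntitoneConvex_sub_hyperCoeff ha hb hab)
    (nonnegAntitoneConvex_add_hyperCoeff ha hb hab)

theorem stmt_4 (a b : ℝ)
    (h : (a = 1 ∧ 1 ≤ b ∧ b ≤ 4) ∨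
         (1 < a ∧ a ≤ b ∧ b ≤ 3 ∧ b ≤ 1 + a ∧ b ≤ 4 * a / (5 * a - 4))) :
    sSup ((fun z : ℂ => (z * hyperF a b (a + b) z).im) '' Metric.ball (0 : ℂ) 1) =
      Real.pi / (2 * (Real.Gamma a * Real.Gamma b / Real.Gamma (a + b))) := by
  obtain ⟨ha, hb, hab⟩ : 1 ≤ a ∧ 1 ≤ b ∧ (a - 1) * (b - 1) ≤ 3 := by
    rcases h with ⟨rfl, hb, -⟩ | ⟨ha, hab, hb, -, hb'⟩
    · exact ⟨le_rfl, hb, by norm_num⟩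
    · exact ⟨ha.le, ha.le.trans hab, sub_one_mul_sub_one_le_three ha.le hab hb hb'⟩
  exact (stmt_4_general ha hb hab).csSup_eq ((nonempty_ball.2 one_pos).image _)
end

section
/- Let a, b, c be real constants with −1 ≤ a ≤ c, 0 ≤ b ≤ c and c ≠ 0. Then there exists a Borel probability measure μ on [0,1] such that for all z ∈ 𝔻: F(a+1,b+1;c+1;z) = F(a+1,b;c;z) · ∫₀¹ 1/(1 − tz) dμ(t). -/
open Complex Filter MeasureTheory Metric Set

/-!
Gauss's contiguous relations turn `F(a, b+1; c+1) / F(a, b; c)` into a Stieltjes continued fraction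
whose coefficients have Wall's form `(1 - g₀) h₀, (1 - h₀) g₁, (1 - g₁) h₁, …` with
`gₙ = (b + n) / (c + 2n)` and `hₙ = (a + n) / (c + 2n + 1)` in `[0, 1]`.

Let `B` be the lower bidiagonal matrix whose squared entries are these coefficients, alternating
between the diagonal and the subdiagonal. Wall's form makes every finite section of `Bᵀ` a
contraction, so the spectrum of `B Bᵀ` lies in `[0, 1]`, and the continued fraction is the
generating function of the numbers `((B Bᵀ)ᵏ)₀₀`. An `(N + 1)`-dimensional section is exact in
degrees `≤ N`; there these numbers are the moments of the spectral measure of the section at the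
first basis vector, and weak compactness of the probability measures on `[0, 1]` yields one measure
with all the required moments.
-/

open Finset (range)
open PowerSeries (C X coeff)
open scoped Matrix PowerSeries

section Moments

variable {K : Set ℝ}

/-- The generating function `∑ mₖ Xᵏ` of the moments `mₖ = ∫ tᵏ dμ` of a measure `μ` on `K ⊆ ℝ`,
that is, the expansion of the Stieltjes transform `∫ (1 - tX)⁻¹ dμ`. -/
noncomputable def momentSeries (μ : Measure K) : ℝ⟦X⟧ :=
  PowerSeries.mk fun k => ∫ t, (t : ℝ) ^ k ∂μ

@[simp]
lemma coeff_momentSeries (μ : Measure K) (k : ℕ) :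
    coeff k (momentSeries μ) = ∫ t, (t : ℝ) ^ k ∂μ :=
  PowerSeries.coeff_mk _ _

lemma continuous_coeff_momentSeries [CompactSpace K] (k : ℕ) :
    Continuous fun μ : ProbabilityMeasure K => coeff k (momentSeries (μ : Measure K)) := by
  let power : BoundedContinuousFunction K ℝ :=
    .mkOfCompact ⟨fun t => (t : ℝ) ^ k, by fun_prop⟩
  simp only [coeff_momentSeries, continuous_iff_continuousAt]
  exact fun μ => ProbabilityMeasure.tendsto_iff_forall_integral_tendsto.1 tendsto_id power

lemma exists_eq_mul_momentSeries_of_forall_coeff [CompactSpace K] {f g : ℝ⟦X⟧}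
    (h : ∀ N, ∃ μ : ProbabilityMeasure K, ∀ k ≤ N,
      coeff k g = coeff k (f * momentSeries (μ : Measure K))) :
    ∃ μ : ProbabilityMeasure K, g = f * momentSeries (μ : Measure K) := by
  let solutions (N : ℕ) : Set (ProbabilityMeasure K) :=
    {μ | ∀ k ≤ N, coeff k g = coeff k (f * momentSeries (μ : Measure K))}
  have solutions_isClosed (N : ℕ) : IsClosed (solutions N) := by
    simp only [solutions, Set.ofPred_forall, PowerSeries.coeff_mul]
    refine isClosed_iInter fun k => isClosed_iInter fun _ => isClosed_eq continuous_const ?_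
    exact continuous_finsetSum _ fun ij _ =>
      continuous_const.mul (continuous_coeff_momentSeries ij.2)
  obtain ⟨μ, hμ⟩ := IsCompact.nonempty_iInter_of_sequence_nonempty_isCompact_isClosed solutions
    (fun N μ hμ k hk => hμ k (hk.trans N.le_succ)) h (solutions_isClosed 0).isCompact
    solutions_isClosed
  exact ⟨μ, PowerSeries.ext fun k => mem_iInter.1 hμ k k le_rfl⟩

end Moments

section SpectralMeasure

variable {m n : Type*} [Fintype m] [Fintype n] [DecidableEq m]

lemma pow_apply_self_eq_sum_eigenvalues {A : Matrix m m ℝ} (hA : A.IsHermitian) (k : ℕ) (i : m) :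
    (A ^ k) i i = ∑ j, hA.eigenvectorBasis j i ^ 2 * hA.eigenvalues j ^ k := by
  conv_lhs => rw [hA.spectral_theorem, ← map_pow, Matrix.diagonal_pow,
    Unitary.conjStarAlgAut_apply, Matrix.mul_apply]
  refine Finset.sum_congr rfl fun j _ => ?_
  simp only [Matrix.mul_diagonal, Matrix.star_apply, Matrix.IsHermitian.eigenvectorUnitary_apply,
    Function.comp_apply, Pi.pow_apply, RCLike.ofReal_real_eq_id, id_eq, star_trivial]
  ring

lemma exists_probabilityMeasure_integral_pow_eq_pow_apply_self {A : Matrix m m ℝ}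
    (hA : A.IsHermitian) {K : Set ℝ} (hK : ∀ j, hA.eigenvalues j ∈ K) (i : m) :
    ∃ μ : ProbabilityMeasure K, ∀ k, ∫ t, (t : ℝ) ^ k ∂(μ : Measure K) = (A ^ k) i i := by
  let weight (j : m) : ℝ := hA.eigenvectorBasis j i ^ 2
  have weight_nonneg (j : m) : 0 ≤ weight j := sq_nonneg _
  have sum_weight : ∑ j, weight j = 1 := by
    simpa [weight] using (pow_apply_self_eq_sum_eigenvalues hA 0 i).symm
  let μ : Measure K := ∑ j, ENNReal.ofReal (weight j) • .dirac ⟨hA.eigenvalues j, hK j⟩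
  have μ_isProbabilityMeasure : IsProbabilityMeasure μ := by
    constructor
    simp only [μ, Measure.coe_finsetSum, Finset.sum_apply, Measure.smul_apply, measure_univ,
      smul_eq_mul, mul_one]
    rw [← ENNReal.ofReal_sum_of_nonneg fun j _ => weight_nonneg j, sum_weight, ENNReal.ofReal_one]
  refine ⟨⟨μ, μ_isProbabilityMeasure⟩, fun k => ?_⟩
  rw [pow_apply_self_eq_sum_eigenvalues hA, ProbabilityMeasure.coe_mk, integral_finsetSum_measure]
  · refine Finset.sum_congr rfl fun j _ => ?_
    rw [integral_smul_measure, integral_dirac, ENNReal.toReal_ofReal (weight_nonneg j), smul_eq_mul]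
  · exact fun j _ => (integrable_dirac (by simp)).smul_measure ENNReal.ofReal_ne_top

lemma eigenvalues_mul_transpose_mem_Icc {B : Matrix m n ℝ}
    (hB : ∀ x, Bᵀ *ᵥ x ⬝ᵥ Bᵀ *ᵥ x ≤ x ⬝ᵥ x) (hA : (B * Bᵀ).IsHermitian) (j : m) :
    hA.eigenvalues j ∈ Icc (0 : ℝ) 1 := by
  set v := hA.eigenvectorBasis j with hv
  have v_dotProduct_self : v.ofLp ⬝ᵥ v.ofLp = 1 := by
    have := hA.eigenvectorBasis.orthonormal.1 j
    rw [EuclideanSpace.norm_eq, Real.sqrt_eq_one] at this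
    simpa [dotProduct, ← sq] using this
  have eigenvalue_eq : hA.eigenvalues j = Bᵀ *ᵥ v.ofLp ⬝ᵥ Bᵀ *ᵥ v.ofLp := by
    rw [hA.eigenvalues_eq, ← hv, ← Matrix.mulVec_mulVec, Matrix.dotProduct_mulVec,
      Matrix.mulVec_transpose]
    simp
  rw [eigenvalue_eq]
  exact ⟨Finset.sum_nonneg fun _ _ => mul_self_nonneg _, v_dotProduct_self ▸ hB v.ofLp⟩

end SpectralMeasure

lemma eq_sum_antidiagonal_smul_pow_mulVec {R m : Type*} [CommSemiring R] [Fintype m]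
    [DecidableEq m] {A : Matrix m m R} {u : m → R} {φ : ℕ → R} {v : ℕ → m → R} {N : ℕ}
    (hzero : v 0 = φ 0 • u) (hsucc : ∀ k < N, v (k + 1) = A *ᵥ v k + φ (k + 1) • u) :
    ∀ k ≤ N, v k = ∑ ij ∈ Finset.HasAntidiagonal.antidiagonal k, φ ij.1 • (A ^ ij.2 *ᵥ u) := by
  intro k hk
  induction k with
  | zero => simp [hzero]
  | succ k ih =>
    rw [hsucc k hk, ih (by omega), Finset.Nat.sum_antidiagonal_succ', Matrix.mulVec_sum]
    simp [Matrix.mulVec_smul, pow_succ', add_comm]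

section Bidiagonal

/-- The `N × N` matrix with diagonal `d 0, d 1, …` and subdiagonal `e 0, e 1, …`. -/
def lowerBidiagonal {R : Type*} [AddZeroClass R] (d e : ℕ → R) (N : ℕ) :
    Matrix (Fin N) (Fin N) R :=
  Matrix.of fun i j => (if (i : ℕ) = j then d j else 0) + (if (i : ℕ) = j + 1 then e j else 0)

variable {R : Type*} [CommSemiring R] (d e : ℕ → R) {N : ℕ}

lemma lowerBidiagonal_transpose_mulVec {x : ℕ → R} (hx : x N = 0) (j : Fin N) :
    ((lowerBidiagonal d e N)ᵀ *ᵥ fun i => x i) j = d j * x j + e j * x (j + 1) := by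
  have sum_subdiagonal : ∑ i : Fin N, (if (i : ℕ) = j + 1 then e j * x i else 0) =
      e j * x (j + 1) := by
    rw [Fin.sum_univ_eq_sum_range (fun i => if i = j + 1 then e j * x i else 0),
      Finset.sum_ite_eq']
    split_ifs with hj
    · rfl
    · rw [show (j : ℕ) + 1 = N by grind, hx, mul_zero]
  simp [Matrix.mulVec, dotProduct, lowerBidiagonal, add_mul, Finset.sum_add_distrib,
    ite_mul, sum_subdiagonal, ← Fin.ext_iff]

lemma lowerBidiagonal_mulVec_zero (y : ℕ → R) :
    (lowerBidiagonal d e (N + 1) *ᵥ fun j => y j) 0 = d 0 * y 0 := by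
  simp [Matrix.mulVec, dotProduct, lowerBidiagonal, Fin.sum_univ_succ]

lemma lowerBidiagonal_mulVec_succ (y : ℕ → R) (i : Fin N) :
    (lowerBidiagonal d e (N + 1) *ᵥ fun j => y j) i.succ =
      d (i + 1) * y (i + 1) + e i * y i := by
  have sum_diagonal : ∑ j : Fin (N + 1), (if (i : ℕ) + 1 = j then d j * y j else 0) =
      d (i + 1) * y (i + 1) := by
    rw [Fin.sum_univ_eq_sum_range (fun j => if (i : ℕ) + 1 = j then d j * y j else 0),
      Finset.sum_ite_eq, if_pos (by simp)]
  have sum_subdiagonal : ∑ j : Fin (N + 1), (if (i : ℕ) = j then e j * y j else 0) =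
      e i * y i := by
    rw [Fin.sum_univ_eq_sum_range (fun j => if (i : ℕ) = j then e j * y j else 0),
      Finset.sum_ite_eq, if_pos (by grind)]
  simp [Matrix.mulVec, dotProduct, lowerBidiagonal, add_mul, Finset.sum_add_distrib, sum_diagonal,
    sum_subdiagonal]

end Bidiagonal

section Contraction

lemma add_sq_le_of_sq_eq_mul {a b t d e : ℝ} (ha : 0 ≤ a) (hb : 0 ≤ b) (ht : t ∈ Icc (0 : ℝ) 1)
    (hd : d ^ 2 = a * t) (he : e ^ 2 = (1 - t) * b) (x y : ℝ) :
    (d * x + e * y) ^ 2 ≤ a * x ^ 2 + b * y ^ 2 := by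
  have ht' : 0 ≤ 1 - t := sub_nonneg.2 ht.2
  have cross_term : 2 * (d * x) * (e * y) ≤ (1 - t) * (a * x ^ 2) + t * (b * y ^ 2) := by
    refine le_of_sq_le_sq ?_ (by have := ht.1; positivity)
    calc
      (2 * (d * x) * (e * y)) ^ 2 = 4 * ((1 - t) * (a * x ^ 2)) * (t * (b * y ^ 2)) := by
        linear_combination 4 * x ^ 2 * y ^ 2 * (e ^ 2 * hd + a * t * he)
      _ ≤ _ := four_mul_le_sq_add _ _
  linear_combination cross_term + x ^ 2 * hd + y ^ 2 * he

variable {g h d e : ℕ → ℝ} (hg : ∀ n, g n ∈ Icc (0 : ℝ) 1) (hh : ∀ n, h n ∈ Icc (0 : ℝ) 1)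
  (hd : ∀ n, d n ^ 2 = (1 - g n) * h n) (he : ∀ n, e n ^ 2 = (1 - h n) * g (n + 1)) {N : ℕ}
include hg hh hd he

lemma sum_bidiagonal_sq_le {x : ℕ → ℝ} (hx : x N = 0) :
    ∑ n ∈ range N, (d n * x n + e n * x (n + 1)) ^ 2 ≤ ∑ n ∈ range N, x n ^ 2 := by
  calc
    _ ≤ ∑ n ∈ range N, ((1 - g n) * x n ^ 2 + g (n + 1) * x (n + 1) ^ 2) :=
      Finset.sum_le_sum fun n _ => add_sq_le_of_sq_eq_mul (sub_nonneg.2 (hg n).2) (hg (n + 1)).1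
        (hh n) (hd n) (he n) _ _
    _ = ∑ n ∈ range N, x n ^ 2 + ∑ n ∈ range N, (g (n + 1) * x (n + 1) ^ 2 - g n * x n ^ 2) := by
      rw [← Finset.sum_add_distrib]
      exact Finset.sum_congr rfl fun n _ => by ring
    _ = ∑ n ∈ range N, x n ^ 2 - g 0 * x 0 ^ 2 := by
      rw [Finset.sum_range_sub fun n => g n * x n ^ 2, hx]
      ring
    _ ≤ ∑ n ∈ range N, x n ^ 2 := sub_le_self _ (mul_nonneg (hg 0).1 (sq_nonneg _))

lemma lowerBidiagonal_transpose_mulVec_dotProduct_self_le (x : Fin N → ℝ) :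
    (lowerBidiagonal d e N)ᵀ *ᵥ x ⬝ᵥ (lowerBidiagonal d e N)ᵀ *ᵥ x ≤ x ⬝ᵥ x := by
  obtain ⟨y, hyN, rfl⟩ : ∃ y : ℕ → ℝ, y N = 0 ∧ x = fun i : Fin N => y i :=
    ⟨fun n => if hn : n < N then x ⟨n, hn⟩ else 0, by simp, by simp⟩
  simp only [dotProduct, lowerBidiagonal_transpose_mulVec _ _ hyN, ← sq]
  rw [Fin.sum_univ_eq_sum_range (fun n => (d n * y n + e n * y (n + 1)) ^ 2),
    Fin.sum_univ_eq_sum_range (fun n => y n ^ 2)]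
  exact sum_bidiagonal_sq_le hg hh hd he hyN

end Contraction

section Chain

/-- The three-term recurrences satisfied by the tails of the Stieltjes continued fraction
`1 / (1 - α₀X / (1 - β₀X / (1 - α₁X / (1 - β₁X / ⋯))))`: the fraction represents `q 0 / p 0`, and
its successive tails are `p 1 / q 0`, `q 1 / p 1`, `p 2 / q 1`, …. -/
structure IsStieltjesChain {R : Type*} [Semiring R] (α β : ℕ → R) (p q : ℕ → R⟦X⟧) : Prop where
  q_eq (n : ℕ) : q n = p n + C (α n) * X * p (n + 1)
  p_succ_eq (n : ℕ) : p (n + 1) = q n + C (β n) * X * q (n + 1)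

variable {R : Type*} [CommSemiring R]

/-- The `q n` rescaled by `(∏ dᵢeᵢ) Xⁿ`, which makes the recurrences with coefficients `dₙ²`, `eₙ²`
the two halves of the symmetric system `v = p 0 • e₀ + X B w`, `w = Bᵀ v` for the lower bidiagonal
matrix `B` of `d` and `e`. -/
noncomputable def evenComponent (d e : ℕ → R) (q : ℕ → R⟦X⟧) (n : ℕ) : R⟦X⟧ :=
  C (∏ i ∈ range n, d i * e i) * X ^ n * q n

/-- The `p (n + 1)` rescaled by `dₙ (∏ dᵢeᵢ) Xⁿ`; this is `w` in the system described at
`evenComponent`. -/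
noncomputable def oddComponent (d e : ℕ → R) (p : ℕ → R⟦X⟧) (n : ℕ) : R⟦X⟧ :=
  C ((∏ i ∈ range n, d i * e i) * d n) * X ^ n * p (n + 1)

lemma coeff_evenComponent_of_lt {k n : ℕ} (hkn : k < n) (d e : ℕ → R) (q : ℕ → R⟦X⟧) :
    coeff k (evenComponent d e q n) = 0 := by
  rw [evenComponent, mul_assoc, PowerSeries.coeff_C_mul, PowerSeries.coeff_X_pow_mul',
    if_neg hkn.not_ge, mul_zero]

variable {d e : ℕ → R} {p q : ℕ → R⟦X⟧}
  (hpq : IsStieltjesChain (fun n => d n ^ 2) (fun n => e n ^ 2) p q)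
include hpq

lemma oddComponent_eq (n : ℕ) :
    oddComponent d e p n =
      C (d n) * evenComponent d e q n + C (e n) * evenComponent d e q (n + 1) := by
  simp only [oddComponent, evenComponent, hpq.p_succ_eq n, Finset.prod_range_succ, map_mul, map_pow]
  ring

lemma evenComponent_zero_eq :
    evenComponent d e q 0 = p 0 + X * (C (d 0) * oddComponent d e p 0) := by
  simp only [oddComponent, evenComponent, hpq.q_eq 0, Finset.prod_range_zero, map_pow, map_one,
    one_mul, pow_zero]
  ring

lemma evenComponent_succ_eq (n : ℕ) :
    evenComponent d e q (n + 1) =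
      X * (C (d (n + 1)) * oddComponent d e p (n + 1) + C (e n) * oddComponent d e p n) := by
  simp only [oddComponent, evenComponent, hpq.q_eq (n + 1), Finset.prod_range_succ, map_mul,
    map_pow]
  ring

lemma coeff_zero_evenComponent (N : ℕ) :
    (fun i : Fin (N + 1) => coeff 0 (evenComponent d e q i)) =
      coeff 0 (p 0) • Pi.single 0 1 := by
  ext i
  cases i using Fin.cases with
  | zero => simp [evenComponent_zero_eq hpq]
  | succ i => simp [evenComponent_succ_eq hpq]

lemma coeff_succ_evenComponent {k N : ℕ} (hk : k ≤ N) :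
    (fun i : Fin (N + 1) => coeff (k + 1) (evenComponent d e q i)) =
      (lowerBidiagonal d e (N + 1) * (lowerBidiagonal d e (N + 1))ᵀ) *ᵥ
        (fun i => coeff k (evenComponent d e q i)) + coeff (k + 1) (p 0) • Pi.single 0 1 := by
  have transpose_mulVec : (lowerBidiagonal d e (N + 1))ᵀ *ᵥ
      (fun i => coeff k (evenComponent d e q i)) =
      fun i : Fin (N + 1) => coeff k (oddComponent d e p i) := by
    ext i
    rw [lowerBidiagonal_transpose_mulVec d e (x := fun n => coeff k (evenComponent d e q n))
      (coeff_evenComponent_of_lt (Nat.lt_succ_of_le hk) ..), oddComponent_eq hpq]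
    simp
  ext i
  rw [← Matrix.mulVec_mulVec, transpose_mulVec, Pi.add_apply]
  cases i using Fin.cases with
  | zero =>
    rw [lowerBidiagonal_mulVec_zero d e fun n => coeff k (oddComponent d e p n)]
    simp [evenComponent_zero_eq hpq, PowerSeries.coeff_succ_X_mul, add_comm]
  | succ i =>
    rw [lowerBidiagonal_mulVec_succ d e fun n => coeff k (oddComponent d e p n)]
    simp [evenComponent_succ_eq hpq, PowerSeries.coeff_succ_X_mul]

lemma coeff_q_zero_eq_sum_antidiagonal {k N : ℕ} (hk : k ≤ N) :
    coeff k (q 0) = ∑ ij ∈ Finset.HasAntidiagonal.antidiagonal k, coeff ij.1 (p 0) *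
      ((lowerBidiagonal d e (N + 1) * (lowerBidiagonal d e (N + 1))ᵀ) ^ ij.2) 0 0 := by
  have := congrFun (eq_sum_antidiagonal_smul_pow_mulVec (φ := fun k => coeff k (p 0))
    (v := fun k (i : Fin (N + 1)) => coeff k (evenComponent d e q i))
    (coeff_zero_evenComponent hpq N)
    (fun k hk => coeff_succ_evenComponent hpq (Nat.le_of_lt hk)) k hk) 0
  simpa [evenComponent, Finset.sum_apply] using this

end Chain

theorem IsStieltjesChain.exists_eq_mul_momentSeries {g h : ℕ → ℝ} {p q : ℕ → ℝ⟦X⟧}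
    (hg : ∀ n, g n ∈ Icc (0 : ℝ) 1) (hh : ∀ n, h n ∈ Icc (0 : ℝ) 1)
    (hpq : IsStieltjesChain (fun n => (1 - g n) * h n) (fun n => (1 - h n) * g (n + 1)) p q) :
    ∃ μ : ProbabilityMeasure (Icc (0 : ℝ) 1),
      q 0 = p 0 * momentSeries (μ : Measure (Icc (0 : ℝ) 1)) := by
  let d n := √((1 - g n) * h n)
  let e n := √((1 - h n) * g (n + 1))
  have hd n : d n ^ 2 = (1 - g n) * h n :=
    Real.sq_sqrt (mul_nonneg (sub_nonneg.2 (hg n).2) (hh n).1)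
  have he n : e n ^ 2 = (1 - h n) * g (n + 1) :=
    Real.sq_sqrt (mul_nonneg (sub_nonneg.2 (hh n).2) (hg (n + 1)).1)
  simp only [← hd, ← he] at hpq
  refine exists_eq_mul_momentSeries_of_forall_coeff fun N => ?_
  have hA : (lowerBidiagonal d e (N + 1) * (lowerBidiagonal d e (N + 1))ᵀ).IsHermitian :=
    Matrix.isHermitian_mul_conjTranspose_self _
  obtain ⟨μ, hμ⟩ := exists_probabilityMeasure_integral_pow_eq_pow_apply_self hA
    (eigenvalues_mul_transpose_mem_Icc
      (lowerBidiagonal_transpose_mulVec_dotProduct_self_le hg hh hd he) hA) 0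
  refine ⟨μ, fun k hk => ?_⟩
  simp only [coeff_q_zero_eq_sum_antidiagonal hpq hk, PowerSeries.coeff_mul, coeff_momentSeries, hμ]

section Hypergeometric

/-- The Gaussian hypergeometric series as a formal power series. -/
noncomputable def hypergeometricPowerSeries {𝕂 : Type*} [Field 𝕂] (a b c : 𝕂) : 𝕂⟦X⟧ :=
  PowerSeries.mk (ordinaryHypergeometricCoefficient a b c)

lemma ascPochhammer_succ_eval_left {S : Type*} [CommSemiring S] (n : ℕ) (x : S) :
    (ascPochhammer S (n + 1)).eval x = x * (ascPochhammer S n).eval (x + 1) := by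
  simp [ascPochhammer_succ_left, Polynomial.eval_comp]

variable {𝕂 : Type*} [Field 𝕂]

lemma hypergeometricPowerSeries_comm (a b c : 𝕂) :
    hypergeometricPowerSeries a b c = hypergeometricPowerSeries b a c := by
  ext n
  simp only [hypergeometricPowerSeries, PowerSeries.coeff_mk]
  ring

lemma ascPochhammer_eval_ne_zero {c : 𝕂} (hc : ∀ n : ℕ, c + n ≠ 0) (k : ℕ) :
    (ascPochhammer 𝕂 k).eval c ≠ 0 := by
  rw [Ne, ascPochhammer_eval_eq_zero_iff]
  rintro ⟨n, -, hn⟩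
  exact hc n (by rw [hn, add_neg_cancel])

lemma ordinaryHypergeometricCoefficient_succ_contiguous [CharZero 𝕂] (a b : 𝕂) {c : 𝕂}
    (hc : ∀ n : ℕ, c + n ≠ 0) (k : ℕ) :
    ordinaryHypergeometricCoefficient a (b + 1) (c + 1) (k + 1) =
      ordinaryHypergeometricCoefficient a b c (k + 1) +
        (1 - b / c) * (a / (c + 1)) *
          ordinaryHypergeometricCoefficient (a + 1) (b + 1) (c + 2) k := by
  have hc_zero : c ≠ 0 := by simpa using hc 0
  have hc_one : c + 1 ≠ 0 := by simpa using hc 1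
  have hc_succ (n : ℕ) : c + 1 + n ≠ 0 := by
    simpa [add_assoc, add_comm, add_left_comm] using hc (n + 1)
  have hc_k := hc_succ k
  have poch_ne_zero := ascPochhammer_eval_ne_zero hc_succ k
  have factorial_ne_zero : (k.factorial : 𝕂) ≠ 0 := Nat.cast_ne_zero.2 k.factorial_ne_zero
  have succ_ne_zero : (k : 𝕂) + 1 ≠ 0 := Nat.cast_add_one_ne_zero k
  have poch_shift : (ascPochhammer 𝕂 k).eval (c + 2) =
      (ascPochhammer 𝕂 k).eval (c + 1) * (c + 1 + k) / (c + 1) := by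
    rw [← ascPochhammer_succ_eval, ascPochhammer_succ_eval_left, add_assoc, one_add_one_eq_two,
      mul_div_cancel_left₀ _ hc_one]
  simp only [ordinaryHypergeometricCoefficient]
  rw [ascPochhammer_succ_eval_left k a, ascPochhammer_succ_eval_left k b,
    ascPochhammer_succ_eval_left k c, ascPochhammer_succ_eval k (b + 1),
    ascPochhammer_succ_eval k (c + 1), poch_shift, Nat.factorial_succ]
  push_cast
  field_simp
  ring

lemma hypergeometricPowerSeries_contiguous [CharZero 𝕂] (a b : 𝕂) {c : 𝕂}
    (hc : ∀ n : ℕ, c + n ≠ 0) :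
    hypergeometricPowerSeries a (b + 1) (c + 1) = hypergeometricPowerSeries a b c +
      C ((1 - b / c) * (a / (c + 1))) * X *
        hypergeometricPowerSeries (a + 1) (b + 1) (c + 2) := by
  ext k
  cases k with
  | zero => simp [hypergeometricPowerSeries, mul_assoc]
  | succ k =>
    simp only [hypergeometricPowerSeries, PowerSeries.coeff_mk, map_add, mul_assoc (C _) X,
      PowerSeries.coeff_C_mul, PowerSeries.coeff_succ_X_mul]
    exact ordinaryHypergeometricCoefficient_succ_contiguous a b hc k

lemma isStieltjesChain_hypergeometricPowerSeries [CharZero 𝕂] (a b : 𝕂) {c : 𝕂}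
    (hc : ∀ n : ℕ, c + n ≠ 0) :
    IsStieltjesChain
      (fun n => (1 - (b + n) / (c + 2 * n)) * ((a + n) / (c + 2 * n + 1)))
      (fun n => (1 - (a + n) / (c + 2 * n + 1)) * ((b + (n + 1 : ℕ)) / (c + 2 * (n + 1 : ℕ))))
      (fun n => hypergeometricPowerSeries (a + n) (b + n) (c + 2 * n))
      (fun n => hypergeometricPowerSeries (a + n) (b + n + 1) (c + 2 * n + 1)) where
  q_eq n := by
    rw [hypergeometricPowerSeries_contiguous (a + n) (b + n)
      fun m => by simpa [add_assoc] using hc (2 * n + m)]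
    push_cast
    ring_nf
  p_succ_eq n := by
    have := hypergeometricPowerSeries_contiguous (b + n + 1) (a + n) (c := c + 2 * n + 1)
      fun m => by simpa [add_assoc] using hc (2 * n + (1 + m))
    rw [hypergeometricPowerSeries_comm (a + n) (b + n + 1),
      hypergeometricPowerSeries_comm _ (b + (n + 1 : ℕ)),
      hypergeometricPowerSeries_comm _ (b + (n + 1 : ℕ) + 1)]
    push_cast
    convert this using 2 <;> ring_nf

end Hypergeometric

theorem exists_hypergeometricPowerSeries_eq_mul_momentSeries {a b c : ℝ} (ha : 0 ≤ a)
    (hac : a ≤ c + 1) (hb : 0 ≤ b) (hbc : b ≤ c) (hc : 0 < c) :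
    ∃ μ : ProbabilityMeasure (Icc (0 : ℝ) 1),
      hypergeometricPowerSeries a (b + 1) (c + 1) =
        hypergeometricPowerSeries a b c * momentSeries (μ : Measure (Icc (0 : ℝ) 1)) := by
  have chain := isStieltjesChain_hypergeometricPowerSeries a b (c := c) fun n => by positivity
  have hg (n : ℕ) : (b + n) / (c + 2 * n) ∈ Icc (0 : ℝ) 1 :=
    ⟨by positivity, div_le_one_of_le₀ (by linarith [n.cast_nonneg (α := ℝ)]) (by positivity)⟩
  have hh (n : ℕ) : (a + n) / (c + 2 * n + 1) ∈ Icc (0 : ℝ) 1 :=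
    ⟨by positivity, div_le_one_of_le₀ (by linarith [n.cast_nonneg (α := ℝ)]) (by positivity)⟩
  simpa using IsStieltjesChain.exists_eq_mul_momentSeries hg hh chain

section Evaluation

lemma tsum_coeff_mul_of_summable_norm {R A : Type*} [Semiring R] [NormedCommRing A]
    [CompleteSpace A] (φ : R →+* A) {f g : R⟦X⟧} {z : A}
    (hf : Summable fun n => ‖φ (coeff n f) * z ^ n‖)
    (hg : Summable fun n => ‖φ (coeff n g) * z ^ n‖) :
    ∑' n, φ (coeff n (f * g)) * z ^ n =
      (∑' n, φ (coeff n f) * z ^ n) * ∑' n, φ (coeff n g) * z ^ n := by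
  rw [tsum_mul_tsum_eq_tsum_sum_antidiagonal_of_summable_norm hf hg]
  refine tsum_congr fun n => ?_
  rw [PowerSeries.coeff_mul, map_sum, Finset.sum_mul]
  refine Finset.sum_congr rfl fun ij hij => ?_
  rw [← Finset.HasAntidiagonal.mem_antidiagonal.1 hij, map_mul, pow_add]
  ring

lemma one_le_radius_ordinaryHypergeometricSeries {𝕂 : Type*} (𝔸 : Type*) [RCLike 𝕂]
    [NormedDivisionRing 𝔸] [NormedAlgebra 𝕂 𝔸] (a b c : 𝕂) :
    1 ≤ (ordinaryHypergeometricSeries 𝔸 a b c).radius := by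
  by_cases h : ∀ n : ℕ, (n : 𝕂) ≠ -a ∧ (n : 𝕂) ≠ -b ∧ (n : 𝕂) ≠ -c
  · exact (ordinaryHypergeometricSeries_radius_eq_one 𝔸 a b c h).ge
  · obtain ⟨n, hn⟩ : ∃ n : ℕ, (n : 𝕂) = -a ∨ (n : 𝕂) = -b ∨ (n : 𝕂) = -c := by grind
    refine le_top.trans_eq (Eq.symm ?_)
    exact FormalMultilinearSeries.radius_eq_top_of_forall_image_add_eq_zero _ (n + 1) fun m =>
      ordinaryHypergeometricSeries_eq_zero_of_neg_nat a b c hn (by omega)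

lemma hyperF_eq_tsum_coeff (a b c : ℝ) (z : ℂ) :
    hyperF a b c z = ∑' n, ofRealHom (coeff n (hypergeometricPowerSeries a b c)) * z ^ n := by
  refine tsum_congr fun n => ?_
  congr 2
  simp only [hypergeometricPowerSeries, PowerSeries.coeff_mk]
  field_simp

lemma summable_norm_coeff_hypergeometricPowerSeries (a b c : ℝ) {z : ℂ} (hz : ‖z‖ < 1) :
    Summable fun n => ‖ofRealHom (coeff n (hypergeometricPowerSeries a b c)) * z ^ n‖ := by
  have hz_mem : z ∈ eball 0 (ordinaryHypergeometricSeries ℂ a b c).radius := by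
    refine mem_eball_zero_iff.2 (lt_of_lt_of_le ?_
      (one_le_radius_ordinaryHypergeometricSeries ℂ a b c))
    rwa [← ofReal_norm, ENNReal.ofReal_lt_one]
  have := (ordinaryHypergeometricSeries ℂ a b c).summable_norm_apply hz_mem
  simpa [hypergeometricPowerSeries, ordinaryHypergeometricSeries_apply_eq] using this

lemma hasSum_coeff_momentSeries (μ : Measure (Icc (0 : ℝ) 1)) [IsFiniteMeasure μ] {z : ℂ}
    (hz : ‖z‖ < 1) :
    HasSum (fun n => ofRealHom (coeff n (momentSeries μ)) * z ^ n)
      (∫ t, (1 - ((t : ℝ) : ℂ) * z)⁻¹ ∂μ) := by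
  have norm_le (t : Icc (0 : ℝ) 1) : ‖((t : ℝ) : ℂ) * z‖ ≤ ‖z‖ := by
    rw [norm_mul, norm_real, Real.norm_of_nonneg t.2.1]
    exact mul_le_of_le_one_left (norm_nonneg _) t.2.2
  have hasSum_integral := hasSum_integral_of_dominated_convergence (μ := μ)
    (F := fun (n : ℕ) t => (((t : ℝ) : ℂ) * z) ^ n) (fun n _ => ‖z‖ ^ n)
    (fun n => (by fun_prop : Continuous _).aestronglyMeasurable)
    (fun n => .of_forall fun t => by grw [norm_pow, norm_le])
    (.of_forall fun _ => summable_geometric_of_lt_one (norm_nonneg _) hz)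
    (integrable_const _)
    (.of_forall fun t => hasSum_geometric_of_norm_lt_one ((norm_le t).trans_lt hz))
  have coeff_mul_pow (n : ℕ) : ofRealHom (coeff n (momentSeries μ)) * z ^ n =
      ∫ t : Icc (0 : ℝ) 1, (((t : ℝ) : ℂ) * z) ^ n ∂μ := by
    simp only [coeff_momentSeries, ofRealHom_eq_coe, mul_pow, integral_mul_const, ← ofReal_pow,
      integral_complex_ofReal]
  simpa only [coeff_mul_pow] using hasSum_integral

end Evaluation

theorem stmt_9 (a b c : ℝ) (ha : -1 ≤ a) (hac : a ≤ c) (hb : 0 ≤ b) (hbc : b ≤ c)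
    (hc : c ≠ 0) :
    ∃ μ : Measure ℝ, IsProbabilityMeasure μ ∧ μ (Set.Icc (0 : ℝ) 1)ᶜ = 0 ∧
      ∀ z ∈ Metric.ball (0 : ℂ) 1,
        hyperF (a + 1) (b + 1) (c + 1) z =
          hyperF (a + 1) b c z * ∫ t : ℝ, (1 - (t : ℂ) * z)⁻¹ ∂μ := by
  obtain ⟨ν, hν⟩ := exists_hypergeometricPowerSeries_eq_mul_momentSeries
    (neg_le_iff_add_nonneg.1 ha) (add_le_add_left hac 1) hb hbc ((hb.trans hbc).lt_of_ne' hc)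
  have val_embedding : MeasurableEmbedding (Subtype.val : Icc (0 : ℝ) 1 → ℝ) :=
    .subtype_coe measurableSet_Icc
  refine ⟨(ν : Measure (Icc (0 : ℝ) 1)).map Subtype.val,
    Measure.isProbabilityMeasure_map val_embedding.measurable.aemeasurable, ?_, fun z hz => ?_⟩
  · rw [val_embedding.map_apply, preimage_compl, Subtype.coe_preimage_self, compl_univ,
      measure_empty]
  · have hz_norm : ‖z‖ < 1 := mem_ball_zero_iff.1 hz
    have moments := hasSum_coeff_momentSeries (ν : Measure (Icc (0 : ℝ) 1)) hz_norm
    rw [val_embedding.integral_map, ← moments.tsum_eq, hyperF_eq_tsum_coeff, hyperF_eq_tsum_coeff,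
      hν, tsum_coeff_mul_of_summable_norm ofRealHom
        (summable_norm_coeff_hypergeometricPowerSeries (a + 1) b c hz_norm) moments.summable.norm]
end

section
/- Let a, b, c be real constants with −1 ≤ a ≤ c, 0 ≤ b ≤ c and c ≠ 0. Then the radial limit L = lim_{x→1⁻} F(a+1,b;c;−x)/F(a,b;c;−x) exists and satisfies c/(b+c) ≤ L ≤ (2c − b)/(2c). -/
open Complex Filter MeasureTheory Metric Set
/-- Real-valued Gaussian hypergeometric function for real arguments in (-1,1). -/
noncomputable def hyperFR (a b c x : ℝ) : ℝ :=
  ∑' n : ℕ, ((ascPochhammer ℝ n).eval a * (ascPochhammer ℝ n).eval b /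
      ((ascPochhammer ℝ n).eval c * (n.factorial : ℝ))) * x ^ n

/-!
For `0 ≤ b ≤ c` the quotients `(b)ₙ / (c)ₙ` are the moments of a probability measure on `[0, 1]`,
so the binomial series gives Euler's integral `F(a,b;c;z) = ∫ (1 - z t) ^ (-a) dμ(t)`. The integral
is continuous up to `z = -1`, which yields the radial limit, and by Chebyshev's integral inequality
`F(a+1,b;c;z) / F(a,b;c;z)` is increasing in `a`. The two bounds are its values at `a = -1` and
`a = c`, where the series are elementary.
-/

open ProbabilityTheory Polynomial Topology

section Pochhammer

lemma mul_ascPochhammer_eval_add_one {R : Type*} [CommSemiring R] (x : R) (n : ℕ) :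
    x * (ascPochhammer R n).eval (x + 1) = (ascPochhammer R n).eval x * (x + n) := by
  rw [← ascPochhammer_succ_eval, ascPochhammer_succ_left]
  simp

lemma ascPochhammer_eval_ne_zero_s10 {R : Type*} [Ring R] [IsDomain R] {x : R}
    (hx : ∀ k : ℕ, x ≠ -k) (n : ℕ) : (ascPochhammer R n).eval x ≠ 0 := by
  rw [Ne, ascPochhammer_eval_eq_zero_iff]
  rintro ⟨k, -, hk⟩
  exact hx k (by rw [hk, neg_neg])

lemma gamma_add_natCast {x : ℝ} (hx : ∀ k : ℕ, x ≠ -k) (n : ℕ) :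
    Real.Gamma (x + n) = (ascPochhammer ℝ n).eval x * Real.Gamma x := by
  induction n with
  | zero => simp
  | succ n ih =>
    have hxn : x + n ≠ 0 := fun h ↦ hx n (eq_neg_of_add_eq_zero_left h)
    rw [Nat.cast_succ, ← add_assoc, Real.Gamma_add_one hxn, ih, ascPochhammer_succ_eval]
    ring

lemma hasSum_ascPochhammer_div_factorial_mul_pow (a : ℝ) {z : ℝ} (hz : |z| < 1) :
    HasSum (fun n : ℕ ↦ (ascPochhammer ℝ n).eval a / n.factorial * z ^ n) ((1 - z) ^ (-a)) := by
  have hseries := (Real.one_div_one_sub_rpow_hasFPowerSeriesOnBall_zero a).hasSum (y := z)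
    (by simpa [Metric.mem_eball, edist_dist, Real.dist_eq] using hz)
  have hpow : 1 / (1 - (0 + z)) ^ a = (1 - z) ^ (-a) := by
    rw [zero_add, one_div, Real.rpow_neg (by linarith [(abs_lt.1 hz).2])]
  rw [hpow] at hseries
  refine hseries.congr_fun fun n ↦ ?_
  have hcoeff : (ascPochhammer ℝ n).eval a = n.factorial * Ring.choose (a + n - 1) n := by
    rw [← ascPochhammer_smeval_eq_eval, ← Ring.factorial_nsmul_multichoose_eq_ascPochhammer,
      Ring.multichoose_eq, nsmul_eq_mul]
  have : (n.factorial : ℝ) ≠ 0 := by positivity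
  rw [hcoeff, mul_div_cancel_left₀ _ this, FormalMultilinearSeries.ofScalars_apply_eq, smul_eq_mul]

lemma hasSum_natCast_mul_ascPochhammer_div_factorial_mul_pow (a : ℝ) {z : ℝ} (hz : |z| < 1) :
    HasSum (fun n : ℕ ↦ n * ((ascPochhammer ℝ n).eval a / n.factorial * z ^ n))
      (a * z * (1 - z) ^ (-(a + 1))) := by
  rw [← hasSum_nat_add_iff' 1]
  simp only [Finset.range_one, Finset.sum_singleton, Nat.cast_zero, zero_mul, sub_zero]
  refine ((hasSum_ascPochhammer_div_factorial_mul_pow (a + 1) hz).mul_left (a * z)).congr_fun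
    fun n ↦ ?_
  rw [ascPochhammer_succ_eval, ← mul_ascPochhammer_eval_add_one, Nat.factorial_succ]
  push_cast
  field_simp
  ring

end Pochhammer

lemma integral_pos_of_ae_pos {α : Type*} [MeasurableSpace α] {μ : Measure α} [NeZero μ]
    {f : α → ℝ} (hf : Integrable f μ) (hpos : ∀ᵐ x ∂μ, 0 < f x) : 0 < ∫ x, f x ∂μ := by
  have hnonneg : 0 ≤ᵐ[μ] f := hpos.mono fun _ ↦ le_of_lt
  refine (integral_nonneg_of_ae hnonneg).lt_of_ne' fun hzero ↦ ?_
  obtain ⟨x, hx, hx₀⟩ :=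
    (hpos.and ((integral_eq_zero_iff_of_nonneg_ae hnonneg hf).1 hzero)).exists
  exact hx.ne' hx₀

section CompactlySupportedMeasure

variable {X Y : Type*} [TopologicalSpace X] [TopologicalSpace Y] [MeasurableSpace Y]
  [OpensMeasurableSpace Y] [T2Space Y] {μ : Measure Y} [IsFiniteMeasure μ] {K : Set Y}

lemma integrable_of_continuousOn_of_ae_mem {f : Y → ℝ} (hK : IsCompact K)
    (hμ : ∀ᵐ t ∂μ, t ∈ K) (hf : ContinuousOn f K) : Integrable f μ := by
  rw [← Measure.restrict_eq_self_of_ae_mem hμ]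
  exact hf.integrableOn_compact hK

lemma continuousOn_integral_of_continuousOn_prod [FirstCountableTopology X] {f : X → Y → ℝ}
    {s : Set X} (hs : IsCompact s) (hK : IsCompact K) (hμ : ∀ᵐ t ∂μ, t ∈ K)
    (hf : ContinuousOn f.uncurry (s ×ˢ K)) : ContinuousOn (fun x ↦ ∫ t, f x t ∂μ) s := by
  obtain ⟨C, hC⟩ := (hs.prod hK).exists_bound_of_continuousOn hf
  intro x hx
  refine continuousWithinAt_of_dominated (bound := fun _ ↦ C) ?_ ?_ (integrable_const C) ?_
  · filter_upwards [self_mem_nhdsWithin] with y hy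
    exact (integrable_of_continuousOn_of_ae_mem hK hμ (hf.uncurry_left y hy)).aestronglyMeasurable
  · filter_upwards [self_mem_nhdsWithin] with y hy
    filter_upwards [hμ] with t ht using hC (y, t) ⟨hy, ht⟩
  · filter_upwards [hμ] with t ht using hf.uncurry_right t ht x hx

end CompactlySupportedMeasure

section Chebyshev

variable {α : Type*} [MeasurableSpace α] {μ : Measure α} [SFinite μ]

lemma integral_mul_mul_integral_mul_le_of_monovaryOn {s : Set α} {w f g : α → ℝ}
    (hs : ∀ᵐ x ∂μ, x ∈ s) (hw : ∀ x ∈ s, 0 ≤ w x) (hfg : MonovaryOn f g s) (hwi : Integrable w μ)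
    (hwf : Integrable (fun x ↦ w x * f x) μ) (hwg : Integrable (fun x ↦ w x * g x) μ)
    (hwfg : Integrable (fun x ↦ w x * f x * g x) μ) :
    (∫ x, w x * f x ∂μ) * ∫ x, w x * g x ∂μ ≤ (∫ x, w x ∂μ) * ∫ x, w x * f x * g x ∂μ := by
  have hnonneg : 0 ≤ ∫ p : α × α, w p.1 * w p.2 * ((f p.2 - f p.1) * (g p.2 - g p.1))
      ∂μ.prod μ := by
    refine integral_nonneg_of_ae ?_
    filter_upwards [Measure.quasiMeasurePreserving_fst.ae hs,
      Measure.quasiMeasurePreserving_snd.ae hs] with p hp₁ hp₂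
    exact mul_nonneg (mul_nonneg (hw _ hp₁) (hw _ hp₂)) (hfg.sub_mul_sub_nonneg hp₁ hp₂)
  have hexpand (p : α × α) : w p.1 * w p.2 * ((f p.2 - f p.1) * (g p.2 - g p.1)) =
      (w p.1 * (w p.2 * f p.2 * g p.2) + w p.1 * f p.1 * g p.1 * w p.2) -
      (w p.1 * f p.1 * (w p.2 * g p.2) + w p.1 * g p.1 * (w p.2 * f p.2)) := by ring
  simp_rw [hexpand] at hnonneg
  rw [integral_sub (by exact (hwi.mul_prod hwfg).add (hwfg.mul_prod hwi))
      (by exact (hwf.mul_prod hwg).add (hwg.mul_prod hwf)),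
    integral_add (hwi.mul_prod hwfg) (hwfg.mul_prod hwi),
    integral_add (hwf.mul_prod hwg) (hwg.mul_prod hwf)] at hnonneg
  rw [integral_prod_mul w fun x ↦ w x * f x * g x, integral_prod_mul (fun x ↦ w x * f x * g x) w,
    integral_prod_mul (fun x ↦ w x * f x) fun x ↦ w x * g x,
    integral_prod_mul (fun x ↦ w x * g x) fun x ↦ w x * f x] at hnonneg
  linarith

lemma integral_rpow_add_mul_integral_rpow_le {u : α → ℝ} (hu : ∀ᵐ x ∂μ, 0 < u x)
    {p q s : ℝ} (hpq : p ≤ q) (hs : 0 ≤ s)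
    (hp : Integrable (fun x ↦ u x ^ p) μ) (hq : Integrable (fun x ↦ u x ^ q) μ)
    (hps : Integrable (fun x ↦ u x ^ (p + s)) μ) (hqs : Integrable (fun x ↦ u x ^ (q + s)) μ) :
    (∫ x, u x ^ (p + s) ∂μ) * ∫ x, u x ^ q ∂μ ≤ (∫ x, u x ^ p ∂μ) * ∫ x, u x ^ (q + s) ∂μ := by
  have hmono : MonovaryOn (fun x ↦ u x ^ s) (fun x ↦ u x ^ (q - p)) {x | 0 < u x} := by
    intro x hx y hy hxy
    have hlt : u x < u y := lt_of_not_ge fun h ↦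
      hxy.not_ge (Real.rpow_le_rpow (le_of_lt hy) h (sub_nonneg.2 hpq))
    exact Real.rpow_le_rpow (le_of_lt hx) hlt.le hs
  have hps_eq : (fun x ↦ u x ^ (p + s)) =ᵐ[μ] fun x ↦ u x ^ p * u x ^ s := by
    filter_upwards [hu] with x hx using Real.rpow_add hx p s
  have hq_eq : (fun x ↦ u x ^ q) =ᵐ[μ] fun x ↦ u x ^ p * u x ^ (q - p) := by
    filter_upwards [hu] with x hx
    rw [← Real.rpow_add hx, add_sub_cancel]
  have hqs_eq : (fun x ↦ u x ^ (q + s)) =ᵐ[μ] fun x ↦ u x ^ p * u x ^ s * u x ^ (q - p) := by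
    filter_upwards [hu] with x hx
    rw [← Real.rpow_add hx, ← Real.rpow_add hx]
    ring_nf
  rw [integral_congr_ae hps_eq, integral_congr_ae hq_eq, integral_congr_ae hqs_eq]
  exact integral_mul_mul_integral_mul_le_of_monovaryOn hu
    (fun x hx ↦ Real.rpow_nonneg (le_of_lt hx) p) hmono hp
    (hps.congr hps_eq) (hq.congr hq_eq) (hqs.congr hqs_eq)

end Chebyshev

section BetaDistribution

variable {α β : ℝ}

lemma betaPDFReal_nonneg (hα : 0 < α) (hβ : 0 < β) (t : ℝ) : 0 ≤ betaPDFReal α β t := by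
  by_cases ht : 0 < t ∧ t < 1
  · exact (betaPDFReal_pos ht.1 ht.2 hα hβ).le
  · simp [betaPDFReal, ht]

lemma integral_betaPDFReal (hα : 0 < α) (hβ : 0 < β) : ∫ t, betaPDFReal α β t = 1 := by
  rw [integral_eq_lintegral_of_nonneg_ae (ae_of_all _ (betaPDFReal_nonneg hα hβ))
    (stronglyMeasurable_betaPDFReal α β).aestronglyMeasurable]
  simpa only [betaPDF, ENNReal.toReal_one] using
    congrArg ENNReal.toReal (lintegral_betaPDF_eq_one hα hβ)

lemma measurable_betaPDF (α β : ℝ) : Measurable (betaPDF α β) :=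
  (measurable_betaPDFReal α β).ennreal_ofReal

lemma ae_betaMeasure_mem_Icc (α β : ℝ) : ∀ᵐ t ∂betaMeasure α β, t ∈ Icc (0 : ℝ) 1 := by
  rw [betaMeasure, ae_withDensity_iff (measurable_betaPDF α β)]
  refine ae_of_all _ fun t ht ↦ ⟨?_, ?_⟩
  · exact le_of_not_ge fun h ↦ ht (betaPDF_eq_zero_of_nonpos h)
  · exact le_of_not_ge fun h ↦ ht (betaPDF_eq_zero_of_one_le h)

lemma betaPDFReal_mul_pow (hα : 0 < α) (hβ : 0 < β) (n : ℕ) (t : ℝ) :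
    betaPDFReal α β t * t ^ n = beta (α + n) β / beta α β * betaPDFReal (α + n) β t := by
  have hβ₀ := (beta_pos hα hβ).ne'
  have hβₙ := (beta_pos (by positivity : 0 < α + n) hβ).ne'
  unfold betaPDFReal
  split_ifs with ht
  · rw [add_sub_right_comm, Real.rpow_add ht.1, Real.rpow_natCast]
    field_simp
  · simp

lemma beta_add_natCast_div_beta (hα : 0 < α) (hβ : 0 < β) (n : ℕ) :
    beta (α + n) β / beta α β =
      (ascPochhammer ℝ n).eval α / (ascPochhammer ℝ n).eval (α + β) := by
  have hne {x : ℝ} (hx : 0 < x) (k : ℕ) : x ≠ -k := by linarith [k.cast_nonneg (α := ℝ)]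
  have hαβ : 0 < α + β := add_pos hα hβ
  have := (Real.Gamma_pos_of_pos hα).ne'
  have := (Real.Gamma_pos_of_pos hβ).ne'
  have := (Real.Gamma_pos_of_pos hαβ).ne'
  have := (ascPochhammer_pos n _ hαβ).ne'
  rw [beta, beta, add_right_comm, gamma_add_natCast (hne hα), gamma_add_natCast (hne hαβ)]
  field_simp

lemma integral_pow_betaMeasure (hα : 0 < α) (hβ : 0 < β) (n : ℕ) :
    ∫ t, t ^ n ∂betaMeasure α β =
      (ascPochhammer ℝ n).eval α / (ascPochhammer ℝ n).eval (α + β) := by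
  rw [betaMeasure, integral_withDensity_eq_integral_toReal_smul (measurable_betaPDF α β)
    (ae_of_all _ fun _ ↦ ENNReal.ofReal_lt_top)]
  simp_rw [betaPDF, ENNReal.toReal_ofReal (betaPDFReal_nonneg hα hβ _), smul_eq_mul,
    betaPDFReal_mul_pow hα hβ]
  rw [integral_const_mul, integral_betaPDFReal (by positivity) hβ, mul_one,
    beta_add_natCast_div_beta hα hβ]

end BetaDistribution

section EulerMeasure

/-- The measure in Euler's integral for `F(a,b;c;z)`: the beta distribution with parameters `b` and
`c - b` if `0 < b < c`, extended by its weak limits, the point masses at `0` for `b = 0` and at `1`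
for `b = c`. Outside `0 ≤ b ≤ c` the value is junk, chosen so that the measure is always
a probability measure on `[0, 1]`. -/
noncomputable def eulerMeasure (b c : ℝ) : Measure ℝ :=
  if b ≤ 0 then Measure.dirac 0 else if c ≤ b then Measure.dirac 1 else betaMeasure b (c - b)

instance isProbabilityMeasure_eulerMeasure (b c : ℝ) : IsProbabilityMeasure (eulerMeasure b c) := by
  unfold eulerMeasure
  split_ifs with hb hbc
  · infer_instance
  · infer_instance
  · exact isProbabilityMeasureBeta (by linarith) (by linarith)

lemma ae_eulerMeasure_mem_Icc (b c : ℝ) : ∀ᵐ t ∂eulerMeasure b c, t ∈ Icc (0 : ℝ) 1 := by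
  unfold eulerMeasure
  split_ifs
  · simp [ae_dirac_eq]
  · simp [ae_dirac_eq]
  · exact ae_betaMeasure_mem_Icc _ _

lemma integral_pow_eulerMeasure {b c : ℝ} (hb : 0 ≤ b) (hbc : b ≤ c) (n : ℕ) :
    ∫ t, t ^ n ∂eulerMeasure b c = (ascPochhammer ℝ n).eval b / (ascPochhammer ℝ n).eval c := by
  unfold eulerMeasure
  split_ifs with hb₀ hcb
  · obtain rfl : b = 0 := le_antisymm hb₀ hb
    rcases eq_or_ne n 0 with rfl | hn
    · simp
    · simp [ascPochhammer_ne_zero_eval_zero, hn]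
  · obtain rfl : b = c := le_antisymm hbc hcb
    simp [(ascPochhammer_pos n b (not_le.1 hb₀)).ne']
  · rw [integral_pow_betaMeasure (not_le.1 hb₀) (by linarith), add_sub_cancel]

end EulerMeasure

section EulerIntegral

/-- Euler's integral for `F(a,b;c;z)`, which extends the sum of the hypergeometric series from
`|z| < 1` to `z < 1`. -/
noncomputable def eulerIntegral (a b c z : ℝ) : ℝ :=
  ∫ t, (1 - z * t) ^ (-a) ∂eulerMeasure b c

variable {a b c z : ℝ}

lemma one_sub_mul_pos {t : ℝ} (hz : z < 1) (ht : t ∈ Icc (0 : ℝ) 1) : 0 < 1 - z * t := by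
  rcases ht.1.eq_or_lt with rfl | ht₀
  · simp
  · nlinarith [ht.2]

lemma ae_eulerMeasure_one_sub_mul_pos (b c : ℝ) (hz : z < 1) :
    ∀ᵐ t ∂eulerMeasure b c, 0 < 1 - z * t := by
  filter_upwards [ae_eulerMeasure_mem_Icc b c] with t ht using one_sub_mul_pos hz ht

lemma hasSum_integral_one_sub_mul_rpow {μ : Measure ℝ} [IsFiniteMeasure μ]
    (hμ : ∀ᵐ t ∂μ, |t| ≤ 1) (a : ℝ) (hz : |z| < 1) :
    HasSum (fun n : ℕ ↦ (ascPochhammer ℝ n).eval a / n.factorial * z ^ n * ∫ t, t ^ n ∂μ)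
      (∫ t, (1 - z * t) ^ (-a) ∂μ) := by
  simp_rw [← integral_const_mul]
  refine hasSum_integral_of_dominated_convergence
    (fun n _ ↦ ‖(ascPochhammer ℝ n).eval a / n.factorial * z ^ n‖)
    (fun n ↦ by fun_prop) (fun n ↦ ?_)
    (ae_of_all _ fun _ ↦ (hasSum_ascPochhammer_div_factorial_mul_pow a hz).summable.norm)
    (integrable_const _) ?_
  · filter_upwards [hμ] with t ht
    rw [norm_mul, norm_pow t]
    exact mul_le_of_le_one_right (norm_nonneg _) (pow_le_one₀ (norm_nonneg t) ht)
  · filter_upwards [hμ] with t ht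
    have hzt : |z * t| < 1 := by
      rw [abs_mul]
      exact (mul_le_of_le_one_right (abs_nonneg z) ht).trans_lt hz
    simpa only [mul_pow, mul_assoc] using hasSum_ascPochhammer_div_factorial_mul_pow a hzt

lemma hyperFR_eq_eulerIntegral (hb : 0 ≤ b) (hbc : b ≤ c) (hz : |z| < 1) :
    hyperFR a b c z = eulerIntegral a b c z := by
  have hunit : ∀ᵐ t ∂eulerMeasure b c, |t| ≤ 1 := by
    filter_upwards [ae_eulerMeasure_mem_Icc b c] with t ht
    rw [abs_of_nonneg ht.1]
    exact ht.2
  rw [hyperFR, eulerIntegral, ← (hasSum_integral_one_sub_mul_rpow hunit a hz).tsum_eq]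
  refine tsum_congr fun n ↦ ?_
  rw [integral_pow_eulerMeasure hb hbc]
  ring

lemma continuousOn_one_sub_mul_rpow (a : ℝ) :
    ContinuousOn (fun p : ℝ × ℝ ↦ (1 - p.1 * p.2) ^ (-a)) (Iio 1 ×ˢ Icc 0 1) :=
  ContinuousOn.rpow_const (by fun_prop) fun _ hp ↦ .inl (one_sub_mul_pos hp.1 hp.2).ne'

lemma integrable_one_sub_mul_rpow (a b c : ℝ) (hz : z < 1) :
    Integrable (fun t ↦ (1 - z * t) ^ (-a)) (eulerMeasure b c) :=
  integrable_of_continuousOn_of_ae_mem isCompact_Icc (ae_eulerMeasure_mem_Icc b c)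
    (ContinuousOn.uncurry_left (f := fun z t ↦ (1 - z * t) ^ (-a)) z hz
      (continuousOn_one_sub_mul_rpow a))

lemma eulerIntegral_pos (a b c : ℝ) (hz : z < 1) : 0 < eulerIntegral a b c z := by
  refine integral_pos_of_ae_pos (integrable_one_sub_mul_rpow a b c hz) ?_
  filter_upwards [ae_eulerMeasure_one_sub_mul_pos b c hz] with t ht using Real.rpow_pos_of_pos ht _

lemma tendsto_eulerIntegral_neg (a b c : ℝ) :
    Tendsto (fun x ↦ eulerIntegral a b c (-x)) (𝓝[<] 1) (𝓝 (eulerIntegral a b c (-1))) := by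
  have hcont : ContinuousOn (eulerIntegral a b c) (Icc (-1) 0) :=
    continuousOn_integral_of_continuousOn_prod isCompact_Icc isCompact_Icc
      (ae_eulerMeasure_mem_Icc b c) ((continuousOn_one_sub_mul_rpow a).mono
        (prod_mono_left fun z hz ↦ hz.2.trans_lt one_pos))
  have hneg : Tendsto (fun x : ℝ ↦ -x) (𝓝[<] 1) (𝓝[Icc (-1) 0] (-1)) := by
    refine tendsto_nhdsWithin_iff.2 ⟨continuous_neg.continuousWithinAt, ?_⟩
    filter_upwards [Ioo_mem_nhdsLT one_pos] with x hx
    exact ⟨neg_le_neg hx.2.le, neg_nonpos.2 hx.1.le⟩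
  exact (hcont (-1) (by simp)).tendsto.comp hneg

lemma eulerIntegral_zero_left : eulerIntegral 0 b c z = 1 := by
  simp [eulerIntegral]

lemma eulerIntegral_neg_one_left (hb : 0 ≤ b) (hbc : b ≤ c) :
    eulerIntegral (-1) b c z = 1 - z * (b / c) := by
  have hid : Integrable (fun t : ℝ ↦ t) (eulerMeasure b c) :=
    integrable_of_continuousOn_of_ae_mem isCompact_Icc (ae_eulerMeasure_mem_Icc b c) continuousOn_id
  have hmean : ∫ t, t ∂eulerMeasure b c = b / c := by
    simpa using integral_pow_eulerMeasure hb hbc 1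
  simp only [eulerIntegral, neg_neg, Real.rpow_one]
  rw [integral_sub (integrable_const 1) (hid.const_mul z), integral_const_mul, hmean]
  simp

lemma monotone_eulerIntegral_add_one_div (b c : ℝ) (hz : z < 1) :
    Monotone fun a ↦ eulerIntegral (a + 1) b c z / eulerIntegral a b c z := by
  intro p q hpq
  have hlogconvex := integral_rpow_add_mul_integral_rpow_le
    (ae_eulerMeasure_one_sub_mul_pos b c hz) (p := -(q + 1)) (q := -(p + 1)) (by linarith)
    zero_le_one (integrable_one_sub_mul_rpow (q + 1) b c hz)
    (integrable_one_sub_mul_rpow (p + 1) b c hz)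
    (by simpa using integrable_one_sub_mul_rpow q b c hz)
    (by simpa using integrable_one_sub_mul_rpow p b c hz)
  simp only [neg_add, neg_add_cancel_right] at hlogconvex
  refine (div_le_div_iff₀ (eulerIntegral_pos p b c hz) (eulerIntegral_pos q b c hz)).2 ?_
  simpa only [eulerIntegral, neg_add, mul_comm] using hlogconvex

end EulerIntegral

section HypergeometricAtC

variable {b c z : ℝ}

lemma hyperFR_self_left (hc : ∀ k : ℕ, c ≠ -k) (hz : |z| < 1) :
    hyperFR c b c z = (1 - z) ^ (-b) := by
  rw [hyperFR, ← (hasSum_ascPochhammer_div_factorial_mul_pow b hz).tsum_eq]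
  refine tsum_congr fun n ↦ ?_
  have := ascPochhammer_eval_ne_zero_s10 hc n
  field_simp

lemma hyperFR_self_add_one_left (hc : ∀ k : ℕ, c ≠ -k) (hz : |z| < 1) :
    hyperFR (c + 1) b c z = (1 - z) ^ (-b) + b * z * (1 - z) ^ (-(b + 1)) / c := by
  have hc₀ : c ≠ 0 := by simpa using hc 0
  have hsum := (hasSum_ascPochhammer_div_factorial_mul_pow b hz).add
    ((hasSum_natCast_mul_ascPochhammer_div_factorial_mul_pow b hz).div_const c)
  rw [hyperFR, ← hsum.tsum_eq]
  refine tsum_congr fun n ↦ ?_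
  have := ascPochhammer_eval_ne_zero_s10 hc n
  have hshift : (ascPochhammer ℝ n).eval (c + 1) = (ascPochhammer ℝ n).eval c * (c + n) / c := by
    rw [← mul_ascPochhammer_eval_add_one, mul_div_cancel_left₀ _ hc₀]
  rw [hshift]
  field_simp

lemma hyperFR_add_one_div_hyperFR_self (hc : ∀ k : ℕ, c ≠ -k) (hz : |z| < 1) :
    hyperFR (c + 1) b c z / hyperFR c b c z = 1 + b * z / (c * (1 - z)) := by
  have hc₀ : c ≠ 0 := by simpa using hc 0
  have hpos : 0 < 1 - z := by linarith [(abs_lt.1 hz).2]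
  have := (Real.rpow_pos_of_pos hpos (-b)).ne'
  rw [hyperFR_self_add_one_left hc hz, hyperFR_self_left hc hz, neg_add',
    Real.rpow_sub_one hpos.ne']
  field_simp

end HypergeometricAtC

section RadialLimit

variable {b c : ℝ}

lemma tendsto_hyperFR_neg (a : ℝ) (hb : 0 ≤ b) (hbc : b ≤ c) :
    Tendsto (fun x ↦ hyperFR a b c (-x)) (𝓝[<] 1) (𝓝 (eulerIntegral a b c (-1))) := by
  refine (tendsto_eulerIntegral_neg a b c).congr' ?_
  filter_upwards [Ioo_mem_nhdsLT (neg_lt_self one_pos)] with x hx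
  rw [hyperFR_eq_eulerIntegral hb hbc (by rwa [abs_neg, abs_lt])]

lemma tendsto_hyperFR_add_one_div_hyperFR_neg (a : ℝ) (hb : 0 ≤ b) (hbc : b ≤ c) :
    Tendsto (fun x ↦ hyperFR (a + 1) b c (-x) / hyperFR a b c (-x)) (𝓝[<] 1)
      (𝓝 (eulerIntegral (a + 1) b c (-1) / eulerIntegral a b c (-1))) :=
  (tendsto_hyperFR_neg (a + 1) hb hbc).div (tendsto_hyperFR_neg a hb hbc)
    (eulerIntegral_pos a b c (by norm_num)).ne'

lemma eulerIntegral_add_one_div_self_neg_one (hb : 0 ≤ b) (hbc : b ≤ c) (hc : 0 < c) :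
    eulerIntegral (c + 1) b c (-1) / eulerIntegral c b c (-1) = (2 * c - b) / (2 * c) := by
  have hne (k : ℕ) : c ≠ -k := by linarith [k.cast_nonneg (α := ℝ)]
  have hcont : ContinuousAt (fun x : ℝ ↦ 1 + b * -x / (c * (1 - -x))) 1 := by
    fun_prop (disch := norm_num [hc.ne'])
  have hvalue : 1 + b * -1 / (c * (1 - -1)) = (2 * c - b) / (2 * c) := by
    field_simp
    ring
  rw [← hvalue]
  refine tendsto_nhds_unique_of_eventuallyEq (tendsto_hyperFR_add_one_div_hyperFR_neg c hb hbc)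
    (hcont.tendsto.mono_left nhdsWithin_le_nhds) ?_
  filter_upwards [Ioo_mem_nhdsLT (neg_lt_self one_pos)] with x hx
  exact hyperFR_add_one_div_hyperFR_self hne (by rwa [abs_neg, abs_lt])

end RadialLimit

theorem stmt_10 (a b c : ℝ) (ha : -1 ≤ a) (hac : a ≤ c) (hb : 0 ≤ b) (hbc : b ≤ c)
    (hc : c ≠ 0) :
    ∃ L : ℝ,
      Tendsto (fun x : ℝ => hyperFR (a + 1) b c (-x) / hyperFR a b c (-x))
        (nhdsWithin 1 (Set.Iio 1)) (nhds L) ∧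
      c / (b + c) ≤ L ∧ L ≤ (2 * c - b) / (2 * c) := by
  have hc₀ : 0 < c := (hb.trans hbc).lt_of_ne' hc
  have hden : 1 - -1 * (b / c) = (b + c) / c := by
    field_simp
    ring
  have hmono := monotone_eulerIntegral_add_one_div b c (z := -1) (by norm_num)
  refine ⟨_, tendsto_hyperFR_add_one_div_hyperFR_neg a hb hbc, ?_, ?_⟩
  · calc c / (b + c)
        = eulerIntegral (-1 + 1) b c (-1) / eulerIntegral (-1) b c (-1) := by
          rw [neg_add_cancel, eulerIntegral_zero_left, eulerIntegral_neg_one_left hb hbc, hden,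
            one_div_div]
      _ ≤ eulerIntegral (a + 1) b c (-1) / eulerIntegral a b c (-1) := hmono ha
  · calc eulerIntegral (a + 1) b c (-1) / eulerIntegral a b c (-1)
        ≤ eulerIntegral (c + 1) b c (-1) / eulerIntegral c b c (-1) := hmono hac
      _ = (2 * c - b) / (2 * c) := eulerIntegral_add_one_div_self_neg_one hb hbc hc₀
end
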